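/- Let P_1, …, P_m ∈ ℤ[y]_0 be linearly independent over ℚ. Then there exist constants c, γ, C > 0 (depending only on P_1, …, P_m) such that for every finite field 𝔽_q whose characteristic is at least c, one has r_{P_1,…,P_m}(𝔽_q) ≤ C·q^{1−γ}. -/

import Mathlib

open Polynomial

/-!
Let `Λ` be the average over `x, y` of `f₀ x * ∏ i, f i (x + (P i).eval y)`. If every function is the
indicator of a set without nontrivial progressions, then only `y = 0` contributes to `Λ`. So it is
enough to bound a power of the density of the set by `Λ` plus a power of `q⁻¹`; this is done by
induction on the number of polynomials, with constants that depend only on their number and degrees.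

By Cauchy–Schwarz the last function may be replaced by its dual function, the average over `y` of
the remaining factors, and by PET induction some Gowers norm of the dual function then controls `Λ`.
Peluse's degree lowering brings the order of this norm down to `U²`: if the dual function has large
`U^{s+1}` norm, its multiplicative derivatives correlate with characters. Either these characters
can be taken constant up to factors of lower order, so that the `U^s` norm is large already, or a
shorter average twisted by a nontrivial character is large, which the induction hypothesis and, for
the shortest averages, Weyl's inequality exclude. By the inverse theorem for `U²` the last function
may therefore be replaced by a character `χ`. Linear independence keeps all twists nontrivial, so
only `χ = 1` survives, and `Λ` is controlled by the mean of `f₀`. Subtracting from `f₀` its mean `α`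
thus costs little and leaves `α` times a progression with one term less.

Linear independence over `ℚ` passes to `F` unless the characteristic divides the integer Gram
determinant of the coefficient vectors.
-/

namespace PolynomialProgression

open scoped BigOperators ComplexConjugate

section Averages

variable {α Ω : Type*} [Fintype α] [Fintype Ω]

lemma expect_pow_le [Nonempty α] {f : α → ℝ} (hf : ∀ x, 0 ≤ f x) (n : ℕ) :
    (𝔼 x, f x) ^ n ≤ 𝔼 x, f x ^ n := by
  have h := Real.pow_arith_mean_le_arith_mean_pow (Finset.univ : Finset α)
    (fun _ => (Fintype.card α : ℝ)⁻¹) f (fun _ _ => by positivity) (by simp) (fun i _ => hf i) n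
  simpa only [Fintype.expect_eq_sum_div_card, div_eq_inv_mul, Finset.mul_sum] using h

lemma norm_expect_le_expect_norm (f : α → ℂ) : ‖𝔼 x, f x‖ ≤ 𝔼 x, ‖f x‖ :=
  RCLike.norm_expect_le (K := ℂ)

lemma norm_expect_pow_le [Nonempty α] (f : α → ℂ) (n : ℕ) :
    ‖𝔼 x, f x‖ ^ n ≤ 𝔼 x, ‖f x‖ ^ n :=
  (pow_le_pow_left₀ (norm_nonneg _) (norm_expect_le_expect_norm f) n).trans
    (expect_pow_le (fun _ => norm_nonneg _) n)

lemma norm_expect_le_one [Nonempty α] {f : α → ℂ} (hf : ∀ x, ‖f x‖ ≤ 1) : ‖𝔼 x, f x‖ ≤ 1 :=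
  (norm_expect_le_expect_norm f).trans
    (Finset.expect_le Finset.univ_nonempty fun x _ => hf x)

lemma norm_mul_le_one {a b : ℂ} (ha : ‖a‖ ≤ 1) (hb : ‖b‖ ≤ 1) : ‖a * b‖ ≤ 1 := by
  rw [norm_mul]
  exact mul_le_one₀ ha (norm_nonneg _) hb

lemma norm_mul_conj_le_one {a b : ℂ} (ha : ‖a‖ ≤ 1) (hb : ‖b‖ ≤ 1) : ‖a * conj b‖ ≤ 1 :=
  norm_mul_le_one ha ((RCLike.norm_conj b).trans_le hb)

lemma norm_prod_le_one {f : α → ℂ} (hf : ∀ x, ‖f x‖ ≤ 1) : ‖∏ x, f x‖ ≤ 1 := by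
  rw [norm_prod]
  exact Finset.prod_le_one (fun _ _ => norm_nonneg _) fun x _ => hf x

lemma conj_expect (f : α → ℂ) : conj (𝔼 x, f x) = 𝔼 x, conj (f x) :=
  map_expect (starRingEnd ℂ) f Finset.univ

lemma ofReal_norm_expect_sq (f : α → ℂ) :
    ((‖𝔼 x, f x‖ ^ 2 : ℝ) : ℂ) = 𝔼 x, 𝔼 y, f x * conj (f y) := by
  rw [Complex.ofReal_pow, ← Complex.mul_conj', conj_expect, Finset.expect_mul_expect]

section Shift

variable {G E : Type*} [Fintype G] [AddCommMonoid E] [Module ℚ≥0 E]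

lemma expect_add_right [AddGroup G] (f : G → E) (a : G) : 𝔼 x, f (x + a) = 𝔼 x, f x :=
  Fintype.expect_equiv (Equiv.addRight a) _ _ fun _ => rfl

lemma expect_add_left [AddGroup G] (f : G → E) (a : G) : 𝔼 x, f (a + x) = 𝔼 x, f x :=
  Fintype.expect_equiv (Equiv.addLeft a) _ _ fun _ => rfl

lemma expect_prod (f : α × Ω → E) : 𝔼 t, f t = 𝔼 x, 𝔼 y, f (x, y) :=
  Finset.expect_product Finset.univ Finset.univ f

lemma expect_fin_succ {r : ℕ} (K : (Fin (r + 1) → Ω) → E) :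
    𝔼 h, K h = 𝔼 a, 𝔼 h : Fin r → Ω, K (Fin.cons a h) := by
  rw [← expect_prod fun t : Ω × (Fin r → Ω) => K (Fin.cons t.1 t.2)]
  exact (Fintype.expect_equiv (Fin.consEquiv fun _ => Ω) _ _ fun _ => rfl).symm

end Shift

lemma ofReal_norm_expect_sq_eq_expect_sub {G : Type*} [AddGroup G] [Fintype G] (f : G → ℂ) :
    ((‖𝔼 x, f x‖ ^ 2 : ℝ) : ℂ) = 𝔼 a, 𝔼 x, f (x + a) * conj (f x) := by
  rw [ofReal_norm_expect_sq, Finset.expect_comm,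
    Finset.expect_comm (f := fun a x => f (x + a) * conj (f x))]
  exact Finset.expect_congr rfl fun x _ =>
    (expect_add_left (fun y => f y * conj (f x)) x).symm

end Averages

section LowerOrder

lemma mem_unitClosedBall {z : ℂ} : z ∈ Submonoid.unitClosedBall ℂ ↔ ‖z‖ ≤ 1 :=
  mem_closedBall_zero_iff

lemma conj_mem_unitClosedBall {z : ℂ} (hz : ‖z‖ ≤ 1) : conj z ∈ Submonoid.unitClosedBall ℂ :=
  mem_unitClosedBall.2 ((RCLike.norm_conj z).trans_le hz)

variable {Ω M N : Type*} [CommMonoid M] [CommMonoid N] {S : Submonoid M} {n : ℕ}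

/-- A function of `n` variables is of lower order if it is a product of functions, with values in
`S`, of `n - 1` of the variables each. -/
def IsLowerOrder (S : Submonoid M) (B : (Fin n → Ω) → M) : Prop :=
  ∃ b : Fin n → (Fin n → Ω) → M, (∀ i h, b i h ∈ S) ∧
    (∀ i h a, b i (Function.update h i a) = b i h) ∧ ∀ h, B h = ∏ i, b i h

lemma IsLowerOrder.mem {B : (Fin n → Ω) → M} (hB : IsLowerOrder S B) (h : Fin n → Ω) : B h ∈ S := by
  obtain ⟨b, hbS, -, hB⟩ := hB
  exact hB h ▸ S.prod_mem fun i _ => hbS i h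

lemma IsLowerOrder.mul {B C : (Fin n → Ω) → M} (hB : IsLowerOrder S B) (hC : IsLowerOrder S C) :
    IsLowerOrder S fun h => B h * C h := by
  obtain ⟨b, hbS, hb, hB⟩ := hB
  obtain ⟨c, hcS, hc, hC⟩ := hC
  exact ⟨fun i h => b i h * c i h, fun i h => S.mul_mem (hbS i h) (hcS i h),
    fun i h a => by simp only [hb, hc],
    fun h => by simp only [hB, hC, Finset.prod_mul_distrib]⟩

lemma IsLowerOrder.map {T : Submonoid N} {B : (Fin n → Ω) → M} {H : Type*} [FunLike H M N]
    [MonoidHomClass H M N] (f : H)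
    (hf : ∀ x ∈ S, f x ∈ T) (hB : IsLowerOrder S B) : IsLowerOrder T fun h => f (B h) := by
  obtain ⟨b, hbS, hb, hB⟩ := hB
  exact ⟨fun i h => f (b i h), fun i h => hf _ (hbS i h), fun i h a => by simp only [hb],
    fun h => by simp only [hB, map_prod]⟩

lemma isLowerOrder_const {c : M} (hc : c ∈ S) : IsLowerOrder S fun _ : Fin 1 → Ω => c :=
  ⟨fun _ _ => c, fun _ _ => hc, fun _ _ _ => rfl, fun _ => by simp⟩

lemma IsLowerOrder.eq_const {B : (Fin 1 → Ω) → M} [Nonempty Ω] (hB : IsLowerOrder S B) :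
    ∃ c ∈ S, ∀ h, B h = c := by
  obtain ⟨b, hbS, hb, hB⟩ := hB
  let h₀ : Fin 1 → Ω := fun _ => Classical.arbitrary Ω
  refine ⟨b 0 h₀, hbS 0 h₀, fun h => ?_⟩
  rw [hB, Fin.prod_univ_one, ← hb 0 h₀ (h 0)]
  congr 1
  ext i
  rw [Subsingleton.elim i 0, Function.update_self]

lemma IsLowerOrder.cons {β : (Fin n → Ω) → M} {B : Ω → (Fin n → Ω) → M} (hβ : ∀ h, β h ∈ S)
    (hB : ∀ a, IsLowerOrder S (B a)) :
    IsLowerOrder S fun h : Fin (n + 1) → Ω => β (Fin.tail h) * B (h 0) (Fin.tail h) := by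
  choose b hbS hb hB using hB
  refine ⟨Fin.cons (fun h => β (Fin.tail h)) fun i h => b (h 0) i (Fin.tail h), ?_, ?_, ?_⟩
  · exact Fin.cases (fun h => hβ _) fun i h => hbS _ _ _
  · refine Fin.cases (fun h a => ?_) fun i h a => ?_
    · simp only [Fin.cons_zero, Fin.tail_update_zero]
    · simp only [Fin.cons_succ, Fin.tail_update_succ, hb,
        Function.update_of_ne (Fin.succ_ne_zero i).symm]
  · intro h
    simp only [Fin.prod_univ_succ, hB, Fin.cons_zero, Fin.cons_succ]

lemma IsLowerOrder.exists_eq_cons {B : (Fin (n + 1) → Ω) → M} [Nonempty Ω]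
    (hB : IsLowerOrder S B) :
    ∃ (β : (Fin n → Ω) → M) (B' : Ω → (Fin n → Ω) → M), (∀ h, β h ∈ S) ∧
      (∀ a, IsLowerOrder S (B' a)) ∧ ∀ a h, B (Fin.cons a h) = β h * B' a h := by
  obtain ⟨b, hbS, hb, hB⟩ := hB
  refine ⟨fun h => b 0 (Fin.cons (Classical.arbitrary Ω) h),
    fun a h => ∏ i : Fin n, b i.succ (Fin.cons a h), fun h => hbS _ _,
    fun a => ⟨fun i h => b i.succ (Fin.cons a h), fun i h => hbS _ _, fun i h c => ?_,
      fun h => rfl⟩, fun a h => ?_⟩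
  · simp only [Fin.cons_update, hb]
  · rw [hB, Fin.prod_univ_succ, ← hb 0 (Fin.cons a h) (Classical.arbitrary Ω), Fin.update_cons_zero]

end LowerOrder

section Box

variable {Ω : Type*} [Fintype Ω]

/-- The box average `𝔼 ∏ K(h_ω)` of a kernel in `r + 1` variables, over the vertices `h_ω` of a
random box; it is the `2 ^ (r + 1)`-th power of the box norm. -/
noncomputable def boxAverage : (r : ℕ) → ((Fin (r + 1) → Ω) → ℂ) → ℝ
  | 0, K => ‖𝔼 h, K h‖ ^ 2
  | r + 1, K => 𝔼 a, 𝔼 b, boxAverage r fun h => K (Fin.cons a h) * conj (K (Fin.cons b h))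

/-- Averaging out one variable by Cauchy–Schwarz: it duplicates that variable and removes the
factor `β` which does not depend on it. -/
lemma norm_expect_fin_succ_sq_le [Nonempty Ω] {r : ℕ} {β : (Fin r → Ω) → ℂ} (hβ : ∀ h, ‖β h‖ ≤ 1)
    (f : Ω → (Fin r → Ω) → ℂ) :
    ‖𝔼 a, 𝔼 h, β h * f a h‖ ^ 2 ≤ 𝔼 a, 𝔼 b, ‖𝔼 h, f a h * conj (f b h)‖ := by
  calc ‖𝔼 a, 𝔼 h, β h * f a h‖ ^ 2 ≤ 𝔼 h, ‖𝔼 a, f a h‖ ^ 2 := by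
        rw [Finset.expect_comm]
        simp only [← Finset.mul_expect]
        refine (norm_expect_pow_le _ 2).trans (Finset.expect_le_expect fun h _ => ?_)
        gcongr
        rw [norm_mul]
        exact mul_le_of_le_one_left (norm_nonneg _) (hβ h)
    _ = ‖𝔼 a, 𝔼 b, 𝔼 h, f a h * conj (f b h)‖ := by
        have key : ((𝔼 h, ‖𝔼 a, f a h‖ ^ 2 : ℝ) : ℂ) = 𝔼 a, 𝔼 b, 𝔼 h, f a h * conj (f b h) := by
          simp only [Complex.ofReal_expect, ofReal_norm_expect_sq]
          rw [Finset.expect_comm]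
          exact Finset.expect_congr rfl fun a _ => Finset.expect_comm _ _ _
        rw [← key, Complex.norm_real, Real.norm_of_nonneg]
        exact Finset.expect_nonneg fun h _ => sq_nonneg _
    _ ≤ 𝔼 a, 𝔼 b, ‖𝔼 h, f a h * conj (f b h)‖ :=
        (norm_expect_le_expect_norm _).trans
          (Finset.expect_le_expect fun a _ => norm_expect_le_expect_norm _)

lemma norm_expect_mul_pow_le_boxAverage [Nonempty Ω] {r : ℕ} (K : (Fin (r + 1) → Ω) → ℂ)
    {B : (Fin (r + 1) → Ω) → ℂ} (hB : IsLowerOrder (Submonoid.unitClosedBall ℂ) B) :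
    ‖𝔼 h, K h * B h‖ ^ 2 ^ (r + 1) ≤ boxAverage r K := by
  induction r with
  | zero =>
    obtain ⟨c, hc, hB⟩ := hB.eq_const
    simp only [hB, ← Finset.expect_mul, boxAverage, zero_add, pow_one, norm_mul]
    gcongr
    exact mul_le_of_le_one_right (norm_nonneg _) (mem_unitClosedBall.1 hc)
  | succ r ih =>
    obtain ⟨β, B', hβ, hB', hB⟩ := hB.exists_eq_cons
    have split : 𝔼 h, K h * B h = 𝔼 a, 𝔼 h, β h * (K (Fin.cons a h) * B' a h) := by
      rw [expect_fin_succ]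
      simp only [hB, mul_left_comm]
    have duplicate : ‖𝔼 h, K h * B h‖ ^ 2 ≤ 𝔼 a, 𝔼 b, ‖𝔼 h, K (Fin.cons a h) *
        conj (K (Fin.cons b h)) * (B' a h * conj (B' b h))‖ := by
      rw [split]
      refine (norm_expect_fin_succ_sq_le (fun h => mem_unitClosedBall.1 (hβ h)) _).trans_eq ?_
      simp only [map_mul, mul_mul_mul_comm]
    rw [pow_succ', pow_mul]
    refine (pow_le_pow_left₀ (sq_nonneg _) duplicate _).trans ?_
    refine (expect_pow_le (fun a => Finset.expect_nonneg fun b _ => norm_nonneg _) _).trans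
      (Finset.expect_le_expect fun a _ => ?_)
    refine (expect_pow_le (fun b => norm_nonneg _) _).trans
      (Finset.expect_le_expect fun b _ => ih _ ((hB' a).mul ((hB' b).map (starRingEnd ℂ) ?_)))
    exact fun z hz => conj_mem_unitClosedBall (mem_unitClosedBall.1 hz)

end Box

section Gowers

variable {G : Type*} [AddCommGroup G]

/-- The multiplicative derivative `Δ_a f`. -/
def mulDeriv (a : G) (f : G → ℂ) : G → ℂ := fun x => f (x + a) * conj (f x)

lemma norm_mulDeriv_le_one {f : G → ℂ} (hf : ∀ x, ‖f x‖ ≤ 1) (a x : G) : ‖mulDeriv a f x‖ ≤ 1 :=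
  norm_mul_conj_le_one (hf _) (hf _)

lemma mulDeriv_comm (a b : G) (f : G → ℂ) :
    mulDeriv a (mulDeriv b f) = mulDeriv b (mulDeriv a f) := by
  ext x
  simp only [mulDeriv, map_mul, Complex.conj_conj, add_right_comm x a b]
  ring

/-- The iterated multiplicative derivative `Δ_{h 0} ⋯ Δ_{h (r - 1)} g`. -/
def iterDeriv : {r : ℕ} → (Fin r → G) → (G → ℂ) → G → ℂ
  | 0, _, g => g
  | _ + 1, h, g => mulDeriv (h 0) (iterDeriv (Fin.tail h) g)

lemma norm_iterDeriv_le_one {g : G → ℂ} (hg : ∀ x, ‖g x‖ ≤ 1) {r : ℕ} (h : Fin r → G) (x : G) :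
    ‖iterDeriv h g x‖ ≤ 1 := by
  induction r generalizing x with
  | zero => exact hg x
  | succ r ih => exact norm_mulDeriv_le_one (ih _) _ _

lemma iterDeriv_mulDeriv {r : ℕ} (h : Fin r → G) (a : G) (g : G → ℂ) :
    iterDeriv h (mulDeriv a g) = mulDeriv a (iterDeriv h g) := by
  induction r with
  | zero => rfl
  | succ r ih => rw [iterDeriv, ih, mulDeriv_comm, iterDeriv]

lemma exists_iterDeriv_eq_mul {g : G → ℂ} (hg : ∀ x, ‖g x‖ ≤ 1) (r : ℕ) (x : G) :
    ∃ B, IsLowerOrder (Submonoid.unitClosedBall ℂ) B ∧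
      ∀ h : Fin (r + 1) → G, iterDeriv h g x = g (x + ∑ i, h i) * B h := by
  induction r generalizing x with
  | zero =>
    exact ⟨_, isLowerOrder_const (conj_mem_unitClosedBall (hg x)), fun h => by
      simp [iterDeriv, mulDeriv]⟩
  | succ r ih =>
    choose B hB hBeq using ih
    refine ⟨_, IsLowerOrder.cons (fun h => conj_mem_unitClosedBall (norm_iterDeriv_le_one hg h x))
      fun a => hB (x + a), fun h => ?_⟩
    rw [iterDeriv, mulDeriv, hBeq, Fin.sum_univ_succ h, ← add_assoc, mul_right_comm, mul_assoc]
    rfl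

variable [Fintype G]

/-- The `2 ^ (r + 1)`-th power of the Gowers uniformity norm `‖f‖_{U^{r + 1}}`. -/
noncomputable def gowers : ℕ → (G → ℂ) → ℝ
  | 0, f => ‖𝔼 x, f x‖ ^ 2
  | r + 1, f => 𝔼 a, gowers r (mulDeriv a f)

lemma gowers_nonneg (r : ℕ) (f : G → ℂ) : 0 ≤ gowers r f := by
  induction r generalizing f with
  | zero => exact sq_nonneg _
  | succ r ih => exact Finset.expect_nonneg fun a _ => ih _

lemma gowers_le_one (r : ℕ) {f : G → ℂ} (hf : ∀ x, ‖f x‖ ≤ 1) : gowers r f ≤ 1 := by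
  induction r generalizing f with
  | zero => exact pow_le_one₀ (norm_nonneg _) (norm_expect_le_one hf)
  | succ r ih =>
    exact Finset.expect_le Finset.univ_nonempty fun a _ => ih (norm_mulDeriv_le_one hf a)

lemma gowers_sq_le_gowers_succ (r : ℕ) (f : G → ℂ) : gowers r f ^ 2 ≤ gowers (r + 1) f := by
  induction r generalizing f with
  | zero =>
    have h : gowers 0 f = ‖𝔼 a, 𝔼 x, mulDeriv a f x‖ := by
      simp only [mulDeriv]
      rw [← ofReal_norm_expect_sq_eq_expect_sub, Complex.norm_real,
        Real.norm_of_nonneg (sq_nonneg _), gowers]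
    rw [h]
    exact norm_expect_pow_le _ 2
  | succ r ih =>
    exact (expect_pow_le (fun _ => gowers_nonneg _ _) 2).trans
      (Finset.expect_le_expect fun a _ => ih _)

lemma gowers_conj (r : ℕ) (f : G → ℂ) : gowers r (fun x => conj (f x)) = gowers r f := by
  induction r generalizing f with
  | zero => rw [gowers, gowers, ← conj_expect, RCLike.norm_conj]
  | succ r ih =>
    refine Finset.expect_congr rfl fun a _ => ?_
    rw [← ih (mulDeriv a f)]
    exact congrArg (gowers r) (funext fun x => (map_mul conj _ _).symm)

lemma gowers_add_eq_expect_iterDeriv (s r : ℕ) (g : G → ℂ) :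
    gowers (s + r) g = 𝔼 h : Fin r → G, gowers s (iterDeriv h g) := by
  induction r generalizing g with
  | zero => simp [iterDeriv]
  | succ r ih =>
    rw [expect_fin_succ]
    refine Finset.expect_congr rfl fun a _ => (ih _).trans (Finset.expect_congr rfl fun h _ => ?_)
    rw [iterDeriv_mulDeriv]
    rfl

lemma expect_boxAverage_eq_gowers (r : ℕ) (g : G → ℂ) :
    𝔼 x, boxAverage r (fun h => g (x + ∑ i, h i)) = gowers r g := by
  induction r generalizing g with
  | zero =>
    simp only [boxAverage, gowers, expect_fin_succ, Fin.sum_univ_succ, Fin.cons_zero,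
      Finset.univ_eq_empty, Finset.sum_empty, add_zero, Fintype.expect_const, expect_add_left]
  | succ r ih =>
    simp only [boxAverage, Fin.sum_univ_succ (n := r + 1), Fin.cons_zero, Fin.cons_succ]
    have translate : ∀ b, 𝔼 x, 𝔼 a, boxAverage r (fun h => g (x + (a + ∑ i, h i)) *
        conj (g (x + (b + ∑ i, h i)))) = gowers (r + 1) g := by
      intro b
      calc _ = 𝔼 x, 𝔼 v, boxAverage r (fun h => mulDeriv v g (x + b + ∑ i, h i)) := by
            refine Finset.expect_congr rfl fun x _ => ?_
            rw [← expect_add_right _ b]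
            refine Finset.expect_congr rfl fun v _ => congrArg _ (funext fun h => ?_)
            simp only [mulDeriv]
            congr 2 <;> abel_nf
        _ = 𝔼 v, 𝔼 x, boxAverage r (fun h => mulDeriv v g (x + ∑ i, h i)) := by
            rw [Finset.expect_comm]
            exact Finset.expect_congr rfl fun v _ =>
              expect_add_right (fun x => boxAverage r fun h => mulDeriv v g (x + ∑ i, h i)) b
        _ = gowers (r + 1) g := Finset.expect_congr rfl fun v _ => ih _
    rw [Finset.expect_congr rfl fun x _ => Finset.expect_comm _ _ _, Finset.expect_comm]
    simp only [translate, Fintype.expect_const]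

end Gowers

section Fourier

variable {G : Type*} [AddCommGroup G] [Fintype G]

lemma addChar_apply_mul_conj {G : Type*} [AddCommGroup G] [Finite G] (ψ : AddChar G ℂ)
    (x y : G) : ψ x * conj (ψ y) = ψ (x - y) := by
  rw [← AddChar.map_neg_eq_conj, ← AddChar.map_add_eq_mul, sub_eq_add_neg]

lemma sum_norm_expect_mul_addChar_sq (f : G → ℂ) :
    ∑ ψ : AddChar G ℂ, ‖𝔼 x, f x * ψ x‖ ^ 2 = 𝔼 x, ‖f x‖ ^ 2 := by
  classical
  have expand : ∀ ψ : AddChar G ℂ, ((‖𝔼 x, f x * ψ x‖ ^ 2 : ℝ) : ℂ) =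
      𝔼 x, 𝔼 y, f x * conj (f y) * ψ (x - y) := fun ψ => by
    rw [ofReal_norm_expect_sq]
    refine Finset.expect_congr rfl fun x _ => Finset.expect_congr rfl fun y _ => ?_
    rw [map_mul, mul_mul_mul_comm, addChar_apply_mul_conj]
  rw [← Complex.ofReal_inj, Complex.ofReal_sum, Complex.ofReal_expect]
  simp only [expand, ← Finset.expect_sum_comm, ← Finset.mul_sum, AddChar.sum_apply_eq_ite,
    sub_eq_zero]
  refine Finset.expect_congr rfl fun x _ => ?_
  rw [Complex.ofReal_pow, ← Complex.mul_conj', Fintype.expect_eq_sum_div_card]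
  simp [Finset.sum_ite_eq]

lemma expect_mulDeriv_mul_addChar (g : G → ℂ) (ψ : AddChar G ℂ) :
    𝔼 v, (𝔼 x, mulDeriv v g x) * ψ v = ((‖𝔼 x, g x * ψ x‖ ^ 2 : ℝ) : ℂ) := by
  rw [ofReal_norm_expect_sq_eq_expect_sub]
  refine Finset.expect_congr rfl fun v _ => ?_
  rw [Finset.expect_mul]
  refine Finset.expect_congr rfl fun x _ => ?_
  rw [map_mul, mul_mul_mul_comm, addChar_apply_mul_conj, add_sub_cancel_left, mulDeriv]

lemma exists_gowers_one_le (g : G → ℂ) (hg : ∀ x, ‖g x‖ ≤ 1) :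
    ∃ ψ : AddChar G ℂ, gowers 1 g ≤ ‖𝔼 x, g x * ψ x‖ ^ 2 := by
  have gowers_eq : gowers 1 g = ∑ ψ : AddChar G ℂ, (‖𝔼 x, g x * ψ x‖ ^ 2) ^ 2 := by
    calc gowers 1 g = ∑ ψ : AddChar G ℂ, ‖𝔼 v, (𝔼 x, mulDeriv v g x) * ψ v‖ ^ 2 :=
          (sum_norm_expect_mul_addChar_sq _).symm
      _ = ∑ ψ : AddChar G ℂ, (‖𝔼 x, g x * ψ x‖ ^ 2) ^ 2 := by
          simp only [expect_mulDeriv_mul_addChar, Complex.norm_real, Real.norm_eq_abs, sq_abs]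
  have energy_le_one : ∑ ψ : AddChar G ℂ, ‖𝔼 x, g x * ψ x‖ ^ 2 ≤ 1 := by
    rw [sum_norm_expect_mul_addChar_sq]
    exact Finset.expect_le Finset.univ_nonempty fun x _ => pow_le_one₀ (norm_nonneg _) (hg x)
  obtain ⟨ψ, hψ⟩ := Finite.exists_max fun ψ : AddChar G ℂ => ‖𝔼 x, g x * ψ x‖ ^ 2
  refine ⟨ψ, ?_⟩
  calc gowers 1 g ≤ ∑ χ : AddChar G ℂ, ‖𝔼 x, g x * ψ x‖ ^ 2 * ‖𝔼 x, g x * χ x‖ ^ 2 := by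
        rw [gowers_eq]
        refine Finset.sum_le_sum fun χ _ => ?_
        rw [sq (‖_‖ ^ 2)]
        exact mul_le_mul_of_nonneg_right (hψ χ) (sq_nonneg _)
    _ ≤ ‖𝔼 x, g x * ψ x‖ ^ 2 := by
        rw [← Finset.mul_sum]
        exact mul_le_of_le_one_right (sq_nonneg _) energy_le_one

end Fourier

section Collisions

variable {Ω M : Type*} [Fintype Ω] [CommGroup M]

open Classical in
/-- The `θ`-weighted density of the boxes whose vertices `h_ω` satisfy
`∏ φ(h_ω) ^ (±1) = 1`. -/
noncomputable def collisionDensity :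
    (r : ℕ) → ((Fin (r + 1) → Ω) → ℝ) → ((Fin (r + 1) → Ω) → M) → ℝ
  | 0, θ, φ => 𝔼 h, 𝔼 h', if φ h = φ h' then θ h * θ h' else 0
  | r + 1, θ, φ => 𝔼 a, 𝔼 b, collisionDensity r (fun h => θ (Fin.cons a h) * θ (Fin.cons b h))
      fun h => φ (Fin.cons a h) * (φ (Fin.cons b h))⁻¹

open Classical in
lemma exists_isLowerOrder_collisionDensity_le [Nonempty Ω] {r : ℕ}
    {θ : (Fin (r + 1) → Ω) → ℝ} (hθ : ∀ h, θ h ∈ unitInterval) (φ : (Fin (r + 1) → Ω) → M) :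
    ∃ ψ, IsLowerOrder (⊤ : Submonoid M) ψ ∧
      collisionDensity r θ φ ≤ 𝔼 h, if φ h = ψ h then θ h else 0 := by
  induction r with
  | zero =>
    rw [collisionDensity, Finset.expect_comm]
    obtain ⟨h₀, -, hh₀⟩ := Finset.exists_le_of_le_expect Finset.univ_nonempty
      (le_refl (𝔼 h', 𝔼 h, if φ h = φ h' then θ h * θ h' else 0))
    refine ⟨fun _ => φ h₀, isLowerOrder_const (Submonoid.mem_top _), hh₀.trans ?_⟩
    refine Finset.expect_le_expect fun h _ => ?_
    split_ifs
    exacts [mul_le_of_le_one_right (hθ h).1 (hθ h₀).2, le_rfl]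
  | succ r ih =>
    rw [collisionDensity, Finset.expect_comm]
    obtain ⟨b, -, hb⟩ := Finset.exists_le_of_le_expect Finset.univ_nonempty (le_refl (𝔼 b, 𝔼 a,
      collisionDensity r (fun h => θ (Fin.cons a h) * θ (Fin.cons b h))
        fun h => φ (Fin.cons a h) * (φ (Fin.cons b h))⁻¹))
    choose ψ hψ hle using fun a =>
      ih (fun h => unitInterval.mul_mem (hθ (Fin.cons a h)) (hθ (Fin.cons b h)))
        fun h => φ (Fin.cons a h) * (φ (Fin.cons b h))⁻¹
    refine ⟨_, IsLowerOrder.cons (β := fun h => φ (Fin.cons b h)) (fun _ => Submonoid.mem_top _) hψ,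
      hb.trans ?_⟩
    rw [expect_fin_succ]
    refine Finset.expect_le_expect fun a _ => (hle a).trans (Finset.expect_le_expect fun h _ => ?_)
    simp only [mul_inv_eq_iff_eq_mul, mul_comm (φ (Fin.cons b h)), Fin.cons_zero, Fin.tail_cons]
    split_ifs
    exacts [mul_le_of_le_one_right (hθ _).1 (hθ _).2, le_rfl]

end Collisions

section DegreeLowering

variable {G T Ω : Type*} [AddCommGroup G] [Fintype Ω]

/-- Functions on `T` that are closed under `U, V ↦ U * conj V` and have correlation at most `ε`
with every nontrivial character of `G`, pulled back along `π`. -/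
structure IsPseudorandomFamily [Fintype T] (π : T → G) (𝓕 : Set (T → ℂ)) (ε : ℝ) : Prop where
  norm_le_one : ∀ U ∈ 𝓕, ∀ t, ‖U t‖ ≤ 1
  mul_conj_mem : ∀ U ∈ 𝓕, ∀ V ∈ 𝓕, (fun t => U t * conj (V t)) ∈ 𝓕
  norm_expect_le : ∀ U ∈ 𝓕, ∀ ψ : AddChar G ℂ, ψ ≠ 1 → ‖𝔼 t, U t * ψ (π t)‖ ≤ ε

/-- The summand in the expansion of `θ * ‖𝔼 t, U t * χ (π t)‖ ^ 2` as a double average. -/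
noncomputable def pairKernel (π : T → G) (θ : ℝ) (U : T → ℂ) (χ : AddChar G ℂ) (t t' : T) : ℂ :=
  θ * (U t * conj (U t')) * χ (π t - π t')

variable {π : T → G} [Finite G]

lemma pairKernel_mul_conj (θ θ' : ℝ) (U V : T → ℂ) (χ ψ : AddChar G ℂ) (t t' : T) :
    pairKernel π θ U χ t t' * conj (pairKernel π θ' V ψ t t') =
      pairKernel π (θ * θ') (fun t => U t * conj (V t)) (χ * ψ⁻¹) t t' := by
  simp only [pairKernel, map_mul, Complex.conj_conj, Complex.conj_ofReal, Complex.ofReal_mul,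
    AddChar.mul_apply, AddChar.inv_apply, AddChar.map_neg_eq_conj]
  ring

variable [Fintype T]

lemma expect_pairKernel_mul (θ : ℝ) (U : T → ℂ) (χ : AddChar G ℂ) (b : T → ℂ) :
    𝔼 t, 𝔼 t', pairKernel π θ U χ t t' * (b t * conj (b t')) =
      ((θ * ‖𝔼 t, U t * b t * χ (π t)‖ ^ 2 : ℝ) : ℂ) := by
  rw [Complex.ofReal_mul, ofReal_norm_expect_sq]
  simp only [Finset.mul_expect]
  refine Finset.expect_congr rfl fun t _ => Finset.expect_congr rfl fun t' _ => ?_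
  rw [pairKernel, ← addChar_apply_mul_conj]
  simp only [map_mul]
  ring

lemma expect_pairKernel (θ : ℝ) (U : T → ℂ) (χ : AddChar G ℂ) :
    𝔼 t, 𝔼 t', pairKernel π θ U χ t t' = ((θ * ‖𝔼 t, U t * χ (π t)‖ ^ 2 : ℝ) : ℂ) := by
  simpa only [map_one, mul_one] using expect_pairKernel_mul (π := π) θ U χ fun _ => 1

variable [Nonempty T] [Nonempty Ω] {𝓕 : Set (T → ℂ)} {ε : ℝ}

open Classical in
lemma IsPseudorandomFamily.mul_norm_expect_sq_le (h𝓕 : IsPseudorandomFamily π 𝓕 ε) (hε : 0 ≤ ε)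
    {θ : ℝ} (hθ : θ ∈ unitInterval) {U : T → ℂ} (hU : U ∈ 𝓕) (χ : AddChar G ℂ) :
    θ * ‖𝔼 t, U t * χ (π t)‖ ^ 2 ≤ (if χ = 1 then θ else 0) + ε := by
  have le_one : ‖𝔼 t, U t * χ (π t)‖ ≤ 1 := norm_expect_le_one fun t =>
    norm_mul_le_one (h𝓕.norm_le_one U hU t) (AddChar.norm_apply χ _).le
  split_ifs with hχ
  · have := mul_le_of_le_one_right hθ.1 (pow_le_one₀ (n := 2) (norm_nonneg _) le_one)
    linarith
  · rw [zero_add]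
    calc θ * ‖𝔼 t, U t * χ (π t)‖ ^ 2 ≤ ‖𝔼 t, U t * χ (π t)‖ ^ 2 :=
          mul_le_of_le_one_left (sq_nonneg _) hθ.2
      _ ≤ ‖𝔼 t, U t * χ (π t)‖ := pow_le_of_le_one (norm_nonneg _) le_one two_ne_zero
      _ ≤ ε := h𝓕.norm_expect_le U hU χ hχ

lemma expect_expect_expect_expect_comm {β γ : Type*} [Fintype β] [Fintype γ] {E : Type*}
    [AddCommMonoid E] [Module ℚ≥0 E] (S : β → β → γ → γ → E) :
    𝔼 t, 𝔼 t', 𝔼 a, 𝔼 b, S t t' a b = 𝔼 a, 𝔼 b, 𝔼 t, 𝔼 t', S t t' a b := by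
  have := Finset.expect_comm (Finset.univ : Finset (β × β)) (Finset.univ : Finset (γ × γ))
    fun t a => S t.1 t.2 a.1 a.2
  simpa only [expect_prod] using this

/-- Duplicating the variables of the kernel one at a time reduces the box average to averages of
the functions of `𝓕` against characters, which are negligible unless the character is trivial. -/
lemma IsPseudorandomFamily.expect_boxAverage_pairKernel_le (h𝓕 : IsPseudorandomFamily π 𝓕 ε)
    (hε : 0 ≤ ε) {r : ℕ} {θ : (Fin (r + 1) → Ω) → ℝ} (hθ : ∀ h, θ h ∈ unitInterval)
    {Φ : (Fin (r + 1) → Ω) → T → ℂ} (hΦ : ∀ h h', (fun t => Φ h t * conj (Φ h' t)) ∈ 𝓕)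
    (χ : (Fin (r + 1) → Ω) → AddChar G ℂ) :
    𝔼 t, 𝔼 t', boxAverage r (fun h => pairKernel π (θ h) (Φ h) (χ h) t t') ≤
      collisionDensity r θ χ + ε := by
  classical
  induction r with
  | zero =>
    have expand : 𝔼 t, 𝔼 t', boxAverage 0 (fun h => pairKernel π (θ h) (Φ h) (χ h) t t') =
        𝔼 h, 𝔼 h', θ h * θ h' * ‖𝔼 t, Φ h t * conj (Φ h' t) * (χ h * (χ h')⁻¹) (π t)‖ ^ 2 := by
      rw [← Complex.ofReal_inj]
      simp only [Complex.ofReal_expect, boxAverage, ofReal_norm_expect_sq, pairKernel_mul_conj,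
        ← expect_pairKernel]
      exact expect_expect_expect_expect_comm _
    rw [expand]
    calc _ ≤ 𝔼 h, 𝔼 h', ((if χ h = χ h' then θ h * θ h' else 0) + ε) := by
          refine Finset.expect_le_expect fun h _ => Finset.expect_le_expect fun h' _ => ?_
          simpa only [mul_inv_eq_one] using
            h𝓕.mul_norm_expect_sq_le hε (unitInterval.mul_mem (hθ h) (hθ h')) (hΦ h h')
              (χ h * (χ h')⁻¹)
      _ = collisionDensity 0 θ χ + ε := by
          simp only [Finset.expect_add_distrib, Fintype.expect_const, collisionDensity]
  | succ r ih =>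
    simp only [boxAverage, pairKernel_mul_conj, collisionDensity]
    rw [expect_expect_expect_expect_comm]
    calc _ ≤ 𝔼 a, 𝔼 b, (collisionDensity r (fun h => θ (Fin.cons a h) * θ (Fin.cons b h))
            (fun h => χ (Fin.cons a h) * (χ (Fin.cons b h))⁻¹) + ε) :=
          Finset.expect_le_expect fun a _ => Finset.expect_le_expect fun b _ =>
            ih (fun h => unitInterval.mul_mem (hθ _) (hθ _))
              (fun h h' => h𝓕.mul_conj_mem _ (hΦ _ _) _ (hΦ _ _)) _
      _ = _ := by simp only [Finset.expect_add_distrib, Fintype.expect_const]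

/-- If the functions `Φ h` weighted by lower order factors `B t` correlate with characters `χ h`,
then on most of the correlation `χ` is itself of lower order. -/
lemma IsPseudorandomFamily.exists_isLowerOrder_le (h𝓕 : IsPseudorandomFamily π 𝓕 ε)
    (hε : 0 ≤ ε) {r : ℕ} {Φ : (Fin (r + 1) → Ω) → T → ℂ} (hΦ1 : ∀ h t, ‖Φ h t‖ ≤ 1)
    (hΦ : ∀ h h', (fun t => Φ h t * conj (Φ h' t)) ∈ 𝓕) {B : T → (Fin (r + 1) → Ω) → ℂ}
    (hB : ∀ t, IsLowerOrder (Submonoid.unitClosedBall ℂ) (B t))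
    (χ : (Fin (r + 1) → Ω) → AddChar G ℂ) :
    ∃ ψ, IsLowerOrder (⊤ : Submonoid (AddChar G ℂ)) ψ ∧
      (𝔼 h, (‖𝔼 t, Φ h t * B t h * χ h (π t)‖ ^ 2) ^ 2) ^ 2 ^ (r + 1) ≤
        (𝔼 h, ‖𝔼 t, Φ h t * B t h * ψ h (π t)‖ ^ 2) + ε := by
  classical
  set θ : (Fin (r + 1) → Ω) → ℝ := fun h => ‖𝔼 t, Φ h t * B t h * χ h (π t)‖ ^ 2 with hθ_def
  have hθ : ∀ h, θ h ∈ unitInterval := fun h => ⟨sq_nonneg _, pow_le_one₀ (norm_nonneg _)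
    (norm_expect_le_one fun t => norm_mul_le_one
      (norm_mul_le_one (hΦ1 h t) (mem_unitClosedBall.1 ((hB t).mem h)))
      (AddChar.norm_apply (χ h) _).le)⟩
  have energy_eq : 𝔼 h, θ h ^ 2 = ‖𝔼 t : T × T, 𝔼 h,
      pairKernel π (θ h) (Φ h) (χ h) t.1 t.2 * (B t.1 h * conj (B t.2 h))‖ := by
    have complex_eq : ((𝔼 h, θ h ^ 2 : ℝ) : ℂ) = 𝔼 t : T × T, 𝔼 h,
        pairKernel π (θ h) (Φ h) (χ h) t.1 t.2 * (B t.1 h * conj (B t.2 h)) := by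
      rw [Finset.expect_comm, Complex.ofReal_expect]
      refine Finset.expect_congr rfl fun h _ => ?_
      rw [expect_prod, sq]
      exact (expect_pairKernel_mul (θ h) (Φ h) (χ h) (B · h)).symm
    rw [← complex_eq, Complex.norm_of_nonneg (Finset.expect_nonneg fun h _ => sq_nonneg _)]
  obtain ⟨ψ, hψ, hle⟩ := exists_isLowerOrder_collisionDensity_le hθ χ
  refine ⟨ψ, hψ, ?_⟩
  calc (𝔼 h, θ h ^ 2) ^ 2 ^ (r + 1)
      ≤ 𝔼 t, 𝔼 t', boxAverage r fun h => pairKernel π (θ h) (Φ h) (χ h) t t' := by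
        rw [energy_eq, ← expect_prod fun t : T × T =>
          boxAverage r fun h => pairKernel π (θ h) (Φ h) (χ h) t.1 t.2]
        refine (norm_expect_pow_le _ _).trans (Finset.expect_le_expect fun t _ => ?_)
        exact norm_expect_mul_pow_le_boxAverage _ ((hB t.1).mul ((hB t.2).map (starRingEnd ℂ)
          fun z hz => conj_mem_unitClosedBall (mem_unitClosedBall.1 hz)))
    _ ≤ collisionDensity r θ χ + ε := h𝓕.expect_boxAverage_pairKernel_le hε hθ hΦ χ
    _ ≤ (𝔼 h, ‖𝔼 t, Φ h t * B t h * ψ h (π t)‖ ^ 2) + ε := by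
        gcongr
        refine hle.trans (Finset.expect_le_expect fun h _ => ?_)
        split_ifs with heq
        exacts [by rw [hθ_def, ← heq], sq_nonneg _]

end DegreeLowering

section DegreeLoweringStep

variable {G : Type*} [AddCommGroup G] [Fintype G]

lemma expect_norm_expect_iterDeriv_mul_sq_pow_le {g : G → ℂ} (hg : ∀ x, ‖g x‖ ≤ 1) {r : ℕ}
    {ψ : (Fin (r + 1) → G) → AddChar G ℂ} (hψ : IsLowerOrder ⊤ ψ) :
    (𝔼 h, ‖𝔼 x, iterDeriv h g x * ψ h x‖ ^ 2) ^ 2 ^ (r + 1) ≤ gowers (r + 1) g := by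
  have energy_eq : 𝔼 h, ‖𝔼 x, iterDeriv h g x * ψ h x‖ ^ 2 =
      ‖𝔼 t : G × G, 𝔼 h, iterDeriv h (mulDeriv t.1 g) t.2 * ψ h t.1‖ := by
    have complex_eq : ((𝔼 h, ‖𝔼 x, iterDeriv h g x * ψ h x‖ ^ 2 : ℝ) : ℂ) =
        𝔼 t : G × G, 𝔼 h, iterDeriv h (mulDeriv t.1 g) t.2 * ψ h t.1 := by
      rw [Finset.expect_comm, Complex.ofReal_expect]
      refine Finset.expect_congr rfl fun h _ => ?_
      rw [ofReal_norm_expect_sq_eq_expect_sub, expect_prod]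
      refine Finset.expect_congr rfl fun u _ => Finset.expect_congr rfl fun x _ => ?_
      rw [map_mul, mul_mul_mul_comm, addChar_apply_mul_conj, add_sub_cancel_left,
        iterDeriv_mulDeriv, mulDeriv]
    rw [← complex_eq, Complex.norm_of_nonneg (Finset.expect_nonneg fun h _ => sq_nonneg _)]
  rw [energy_eq]
  refine (norm_expect_pow_le _ _).trans ?_
  rw [expect_prod]
  refine Finset.expect_le_expect fun u _ => ?_
  rw [← expect_boxAverage_eq_gowers]
  refine Finset.expect_le_expect fun x _ => ?_
  obtain ⟨B, hB, iterDeriv_eq⟩ := exists_iterDeriv_eq_mul (norm_mulDeriv_le_one hg u) r x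
  let evalAt : AddChar G ℂ →* ℂ := ⟨⟨fun χ => χ u, rfl⟩, fun _ _ => rfl⟩
  have hψu : IsLowerOrder (Submonoid.unitClosedBall ℂ) fun h => ψ h u :=
    hψ.map evalAt fun χ _ => mem_unitClosedBall.2 (AddChar.norm_apply χ u).le
  simp only [iterDeriv_eq, mul_assoc]
  exact norm_expect_mul_pow_le_boxAverage _ (hB.mul hψu)

variable {Y : Type*} [Fintype Y] [Nonempty Y] {𝓕 : Set (G × Y → ℂ)} {ε : ℝ} {V : G → Y → ℂ}

lemma IsPseudorandomFamily.exists_gowers_pow_le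
    (h𝓕 : IsPseudorandomFamily Prod.fst 𝓕 ε) (hε : 0 ≤ ε) (hV1 : ∀ x y, ‖V x y‖ ≤ 1)
    (hV : ∀ s s', (fun t : G × Y => V (t.1 + s) t.2 * conj (V (t.1 + s') t.2)) ∈ 𝓕) (r : ℕ) :
    ∃ ψ : (Fin (r + 1) → G) → AddChar G ℂ, IsLowerOrder ⊤ ψ ∧
      gowers (r + 2) (fun x => 𝔼 y, V x y) ^ (2 * 2 ^ (r + 1)) ≤
        (𝔼 h, ‖𝔼 x, iterDeriv h (fun x => 𝔼 y, V x y) x * ψ h x‖ ^ 2) + ε := by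
  set D : G → ℂ := fun x => 𝔼 y, V x y with hD
  have hD1 : ∀ x, ‖D x‖ ≤ 1 := fun x => norm_expect_le_one (hV1 x)
  choose B hB iterDeriv_eq using exists_iterDeriv_eq_mul hD1 r
  choose χ hχ using fun h : Fin (r + 1) → G =>
    exists_gowers_one_le (iterDeriv h D) (norm_iterDeriv_le_one hD1 h)
  have expect_eq : ∀ (h : Fin (r + 1) → G) (ψ : AddChar G ℂ), 𝔼 x, iterDeriv h D x * ψ x =
      𝔼 t : G × Y, V (t.1 + ∑ i, h i) t.2 * B t.1 h * ψ t.1 := fun h ψ => by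
    rw [expect_prod]
    refine Finset.expect_congr rfl fun x _ => ?_
    rw [iterDeriv_eq, hD, mul_assoc, Finset.expect_mul]
    simp only [mul_assoc]
  obtain ⟨ψ, hψ, hle⟩ := h𝓕.exists_isLowerOrder_le hε (fun h t => hV1 (t.1 + ∑ i, h i) t.2)
    (fun h h' => hV _ _) (fun t => hB t.1) χ
  refine ⟨ψ, hψ, le_trans ?_ (hle.trans_eq (by simp only [expect_eq]))⟩
  simp only [← expect_eq]
  rw [pow_mul]
  refine pow_le_pow_left₀ (sq_nonneg _) ?_ _
  calc gowers (r + 2) D ^ 2 = (𝔼 h : Fin (r + 1) → G, gowers 1 (iterDeriv h D)) ^ 2 := by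
        rw [← gowers_add_eq_expect_iterDeriv, add_comm 1, add_assoc]
    _ ≤ 𝔼 h : Fin (r + 1) → G, gowers 1 (iterDeriv h D) ^ 2 :=
        expect_pow_le (fun _ => gowers_nonneg _ _) 2
    _ ≤ _ := Finset.expect_le_expect fun h _ => pow_le_pow_left₀ (gowers_nonneg _ _) (hχ h) 2

theorem IsPseudorandomFamily.gowers_add_two_pow_le
    (h𝓕 : IsPseudorandomFamily Prod.fst 𝓕 ε) (hε : ε ∈ unitInterval) (hV1 : ∀ x y, ‖V x y‖ ≤ 1)
    (hV : ∀ s s', (fun t : G × Y => V (t.1 + s) t.2 * conj (V (t.1 + s') t.2)) ∈ 𝓕) (r : ℕ) :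
    gowers (r + 2) (fun x => 𝔼 y, V x y) ^ (2 * 2 ^ (r + 1) * 2 ^ (r + 1)) ≤
      2 ^ 2 ^ (r + 1) * (gowers (r + 1) (fun x => 𝔼 y, V x y) + ε) := by
  obtain ⟨ψ, hψ, hle⟩ := h𝓕.exists_gowers_pow_le hε.1 hV1 hV r
  set D : G → ℂ := fun x => 𝔼 y, V x y
  set τ := 𝔼 h, ‖𝔼 x, iterDeriv h D x * ψ h x‖ ^ 2
  have hτ : 0 ≤ τ := Finset.expect_nonneg fun _ _ => sq_nonneg _
  have τ_pow_le : τ ^ 2 ^ (r + 1) ≤ gowers (r + 1) D :=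
    expect_norm_expect_iterDeriv_mul_sq_pow_le (fun x => norm_expect_le_one (hV1 x)) hψ
  rw [pow_mul]
  calc (gowers (r + 2) D ^ (2 * 2 ^ (r + 1))) ^ 2 ^ (r + 1) ≤ (τ + ε) ^ 2 ^ (r + 1) :=
        pow_le_pow_left₀ (pow_nonneg (gowers_nonneg _ _) _) hle _
    _ ≤ 2 ^ (2 ^ (r + 1) - 1) * (τ ^ 2 ^ (r + 1) + ε ^ 2 ^ (r + 1)) := add_pow_le hτ hε.1 _
    _ ≤ 2 ^ 2 ^ (r + 1) * (gowers (r + 1) D + ε) := by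
        gcongr
        · exact add_nonneg (pow_nonneg hτ _) (pow_nonneg hε.1 _)
        · exact one_le_two
        · exact Nat.sub_le _ _
        · exact pow_le_of_le_one hε.1 hε.2 (by positivity)

end DegreeLoweringStep

lemma inv_card_mem_unitInterval (α : Type*) [Fintype α] [Nonempty α] :
    (Fintype.card α : ℝ)⁻¹ ∈ unitInterval :=
  ⟨by positivity, inv_le_one_of_one_le₀ (by exact_mod_cast Fintype.card_pos)⟩

section PolynomialControl

/-- `x` is polynomially controlled by `y` up to an error `ε`. A single constant `K` serves as
exponent and as factor. -/
def PolyLE (K : ℕ) (ε x y : ℝ) : Prop :=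
  1 ≤ K ∧ x ^ K ≤ K * (y + ε)

variable {K L : ℕ} {ε x y a b : ℝ}

lemma PolyLE.of_pow_le {n : ℕ} {C : ℝ} (hx : x ∈ unitInterval) (hy : 0 ≤ y + ε)
    (h : x ^ n ≤ C * (y + ε)) (hn : n ≤ K) (hC : C ≤ K) (hK : 1 ≤ K) : PolyLE K ε x y :=
  ⟨hK, (pow_le_pow_of_le_one hx.1 hx.2 hn).trans (h.trans (mul_le_mul_of_nonneg_right hC hy))⟩

lemma PolyLE.of_le (hε : 0 ≤ ε) (h : x ≤ y) : PolyLE 1 ε x y :=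
  ⟨le_rfl, by simpa using h.trans (le_add_of_nonneg_right hε)⟩

lemma PolyLE.mono (h : PolyLE K ε x y) (hx : x ∈ unitInterval) (hy : 0 ≤ y + ε) (hKL : K ≤ L) :
    PolyLE L ε x y :=
  .of_pow_le hx hy h.2 hKL (Nat.cast_le.2 hKL) (h.1.trans hKL)

lemma PolyLE.mono_left (h : PolyLE K ε b y) (ha : 0 ≤ a) (hab : a ≤ b) : PolyLE K ε a y :=
  ⟨h.1, (pow_le_pow_left₀ ha hab K).trans h.2⟩

lemma PolyLE.mono_right (h : PolyLE K ε x a) (hab : a ≤ b) : PolyLE K ε x b :=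
  ⟨h.1, h.2.trans (by gcongr)⟩

lemma add_add_pow_le {c : ℝ} (ha : 0 ≤ a) (hb : 0 ≤ b) (hc : 0 ≤ c) (n : ℕ) :
    (a + b + c) ^ n ≤ 3 ^ n * (a ^ n + b ^ n + c ^ n) := by
  have key : ∀ t, 0 ≤ t → a ≤ t → b ≤ t → c ≤ t → t ^ n ≤ a ^ n + b ^ n + c ^ n →
      (a + b + c) ^ n ≤ 3 ^ n * (a ^ n + b ^ n + c ^ n) := fun t _ hat hbt hct hle =>
    calc (a + b + c) ^ n ≤ (3 * t) ^ n := pow_le_pow_left₀ (by positivity) (by linarith) n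
      _ = 3 ^ n * t ^ n := mul_pow _ _ _
      _ ≤ _ := by gcongr
  have := pow_nonneg ha n
  have := pow_nonneg hb n
  have := pow_nonneg hc n
  rcases le_total a b with hab | hab
  · rcases le_total b c with hbc | hbc
    · exact key c hc (hab.trans hbc) hbc le_rfl (by linarith)
    · exact key b hb hab le_rfl hbc (by linarith)
  · rcases le_total a c with hac | hac
    · exact key c hc hac (hab.trans hac) le_rfl (by linarith)
    · exact key a ha le_rfl hab hac (by linarith)

lemma PolyLE.trans_add (h : PolyLE K ε x (a + b)) (ha : PolyLE L ε a y) (hb : PolyLE L ε b y)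
    (hx : x ∈ unitInterval) (ha0 : 0 ≤ a) (hb0 : 0 ≤ b) (hε : ε ∈ unitInterval) (hy : 0 ≤ y) :
    PolyLE ((3 * K) ^ L * (2 * L + 1)) ε x y := by
  have hL := ha.1
  have hK := h.1
  have one_le_pow : 1 ≤ (3 * K) ^ L := Nat.one_le_pow _ _ (by omega)
  refine .of_pow_le (n := K * L) (C := (3 * K) ^ L * (2 * L + 1)) hx (add_nonneg hy hε.1) ?_ ?_
    (by push_cast; rfl) (by nlinarith)
  · calc x ^ (K * L) = (x ^ K) ^ L := pow_mul _ _ _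
      _ ≤ (K * (a + b + ε)) ^ L := pow_le_pow_left₀ (pow_nonneg hx.1 _) h.2 L
      _ ≤ K ^ L * (3 ^ L * (a ^ L + b ^ L + ε ^ L)) := by
          rw [mul_pow]
          gcongr
          exact add_add_pow_le ha0 hb0 hε.1 L
      _ ≤ K ^ L * (3 ^ L * (L * (y + ε) + L * (y + ε) + (y + ε))) := by
          gcongr
          · exact ha.2
          · exact hb.2
          · exact (pow_le_of_le_one hε.1 hε.2 (by omega)).trans (le_add_of_nonneg_left hy)
      _ = (3 * K) ^ L * (2 * L + 1) * (y + ε) := by ring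
  · calc K * L ≤ (3 * K) ^ L * L := by
          gcongr
          exact (by omega : K ≤ 3 * K).trans (Nat.le_self_pow (by omega) _)
      _ ≤ _ := by
          gcongr
          omega

lemma PolyLE.trans (h : PolyLE K ε x a) (ha : PolyLE L ε a y) (hx : x ∈ unitInterval)
    (ha0 : 0 ≤ a) (hε : ε ∈ unitInterval) (hy : 0 ≤ y) :
    PolyLE ((3 * K) ^ L * (2 * L + 1)) ε x y := by
  refine .trans_add (b := 0) (by rwa [add_zero]) ha ⟨ha.1, ?_⟩ hx ha0 le_rfl hε hy
  rw [zero_pow (by have := ha.1; omega)]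
  exact mul_nonneg (Nat.cast_nonneg L) (add_nonneg hy hε.1)

lemma PolyLE.trans_error {δ : ℝ} (h : PolyLE K ε x y) (hε : PolyLE L δ ε 0)
    (hx : x ∈ unitInterval) (hy : y ∈ unitInterval) (hε0 : 0 ≤ ε) (hδ : δ ∈ unitInterval) :
    PolyLE ((3 * K) ^ L * (2 * L + 1)) δ x y := by
  have hxyε : PolyLE K δ x (y + ε) :=
    ⟨h.1, h.2.trans (mul_le_mul_of_nonneg_left (le_add_of_nonneg_right hδ.1) (Nat.cast_nonneg K))⟩
  exact hxyε.trans_add ((PolyLE.of_le hδ.1 le_rfl).mono hy (add_nonneg hy.1 hδ.1) hε.1)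
    (hε.mono_right hy.1) hx hy.1 hε0 hδ hy.1

lemma exists_isGreatest_polyLE_zero (hK : 1 ≤ K) (hε : 0 ≤ ε) :
    ∃ z, IsGreatest {x ∈ unitInterval | PolyLE K ε x 0} z := by
  have hKε : 0 ≤ K * ε := by positivity
  obtain ⟨ρ, hρ, ρ_pow⟩ : ∃ ρ : ℝ, 0 ≤ ρ ∧ ρ ^ K = K * ε :=
    ⟨_, Real.rpow_nonneg hKε _, Real.rpow_inv_natCast_pow hKε (Nat.one_le_iff_ne_zero.1 hK)⟩
  refine ⟨min 1 ρ, ⟨⟨le_min zero_le_one hρ, min_le_left _ _⟩, hK, ?_⟩, fun x hx =>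
    le_min hx.1.2 (le_of_pow_le_pow_left₀ (Nat.one_le_iff_ne_zero.1 hK) hρ ?_)⟩
  · rw [zero_add, ← ρ_pow]
    exact pow_le_pow_left₀ (le_min zero_le_one hρ) (min_le_right _ _) K
  · rw [ρ_pow, ← zero_add ε]
    exact hx.2.2

lemma PolyLE.of_mul_le (h : PolyLE K ε x b) (hxb : x * b ≤ y)
    (hx : x ∈ unitInterval) (hε : 0 ≤ ε) (hy : 0 ≤ y) : PolyLE (K + 1) ε x y := by
  refine .of_pow_le (n := K + 1) (C := K) hx (add_nonneg hy hε) ?_ le_rfl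
    (Nat.cast_le.2 K.le_succ) (Nat.le_add_left _ _)
  calc x ^ (K + 1) = x * x ^ K := pow_succ' _ _
    _ ≤ x * (K * (b + ε)) := mul_le_mul_of_nonneg_left h.2 hx.1
    _ = K * (x * b + x * ε) := by ring
    _ ≤ K * (y + ε) := by
        gcongr
        exact mul_le_of_le_one_left hε hx.2

lemma PolyLE.le_mul_rpow {q : ℝ} (hx : 0 ≤ x) (hq : 0 < q)
    (h : PolyLE K q⁻¹ (x / q) q⁻¹) :
    x ≤ (2 * K : ℝ) ^ (K : ℝ)⁻¹ * q ^ (1 - (K : ℝ)⁻¹) := by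
  have hK : K ≠ 0 := Nat.one_le_iff_ne_zero.1 h.1
  have div_le : x / q ≤ (2 * K * q⁻¹) ^ (K : ℝ)⁻¹ :=
    calc x / q = ((x / q) ^ K) ^ (K : ℝ)⁻¹ := (Real.pow_rpow_inv_natCast (by positivity) hK).symm
      _ ≤ (2 * K * q⁻¹) ^ (K : ℝ)⁻¹ :=
        Real.rpow_le_rpow (by positivity) (h.2.trans_eq (by ring)) (by positivity)
  rw [div_le_iff₀ hq, Real.mul_rpow (by positivity) (by positivity), Real.inv_rpow hq.le] at div_le
  rw [Real.rpow_sub hq, Real.rpow_one]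
  exact div_le.trans_eq (by ring)

end PolynomialControl

section DegreeLoweringTower

universe u v

theorem exists_gowers_succ_polyLE_gowers_one (s : ℕ) :
    ∃ K, ∀ {G : Type u} {Y : Type v} [AddCommGroup G] [Fintype G] [Fintype Y] [Nonempty Y]
      {𝓕 : Set (G × Y → ℂ)} {ε : ℝ} {V : G → Y → ℂ}, IsPseudorandomFamily Prod.fst 𝓕 ε →
      ε ∈ unitInterval → (∀ x y, ‖V x y‖ ≤ 1) →
      (∀ s s', (fun t : G × Y => V (t.1 + s) t.2 * conj (V (t.1 + s') t.2)) ∈ 𝓕) →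
      PolyLE K ε (gowers (s + 1) fun x => 𝔼 y, V x y) (gowers 1 fun x => 𝔼 y, V x y) := by
  induction s with
  | zero => exact ⟨1, fun _ hε _ _ => .of_le hε.1 le_rfl⟩
  | succ r ih =>
    obtain ⟨L, hL⟩ := ih
    let A := 2 * 2 ^ (r + 1) * 2 ^ (r + 1) + 2 ^ 2 ^ (r + 1)
    refine ⟨(3 * A) ^ L * (2 * L + 1), fun {G Y _ _ _ _ 𝓕 ε V} h𝓕 hε hV1 hV => ?_⟩
    have gowers_mem : ∀ k, gowers k (fun x => 𝔼 y, V x y) ∈ unitInterval := fun k =>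
      ⟨gowers_nonneg _ _, gowers_le_one _ fun x => norm_expect_le_one (hV1 x)⟩
    have step : PolyLE A ε (gowers (r + 2) fun x => 𝔼 y, V x y)
        (gowers (r + 1) fun x => 𝔼 y, V x y) :=
      .of_pow_le (gowers_mem _) (add_nonneg (gowers_mem _).1 hε.1)
        (h𝓕.gowers_add_two_pow_le hε hV1 hV r) (Nat.le_add_right _ _)
        (by exact_mod_cast Nat.le_add_left _ _)
        (by have := Nat.one_le_two_pow (n := 2 ^ (r + 1)); omega)
    exact step.trans (hL h𝓕 hε hV1 hV) (gowers_mem _) (gowers_mem _).1 hε (gowers_mem _).1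

end DegreeLoweringTower

section VanDerCorput

lemma norm_expect_mul_sq_le_expect_shift {X G : Type*} [Fintype X] [Nonempty X] [AddCommGroup G]
    [Fintype G] {B : X → ℂ} (hB : ∀ x, ‖B x‖ ≤ 1) (A : X → G → ℂ) :
    ‖𝔼 x, 𝔼 y, B x * A x y‖ ^ 2 ≤ 𝔼 h, ‖𝔼 x, 𝔼 y, A x (y + h) * conj (A x y)‖ := by
  have energy_eq : ((𝔼 x, ‖𝔼 y, A x y‖ ^ 2 : ℝ) : ℂ) =
      𝔼 h, 𝔼 x, 𝔼 y, A x (y + h) * conj (A x y) := by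
    rw [Complex.ofReal_expect, Finset.expect_comm]
    simp only [ofReal_norm_expect_sq_eq_expect_sub]
  calc ‖𝔼 x, 𝔼 y, B x * A x y‖ ^ 2 ≤ 𝔼 x, ‖𝔼 y, A x y‖ ^ 2 := by
        simp only [← Finset.mul_expect]
        refine (norm_expect_pow_le _ 2).trans (Finset.expect_le_expect fun x _ => ?_)
        gcongr
        rw [norm_mul]
        exact mul_le_of_le_one_left (norm_nonneg _) (hB x)
    _ = ‖𝔼 h, 𝔼 x, 𝔼 y, A x (y + h) * conj (A x y)‖ := by
        rw [← energy_eq, Complex.norm_of_nonneg (Finset.expect_nonneg fun x _ => sq_nonneg _)]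
    _ ≤ _ := norm_expect_le_expect_norm _

end VanDerCorput

section PolynomialAverages

variable {F : Type*} [Field F]

/-- The product `∏ g(x + Q(y))` over the pairs `(Q, g)` of a family. -/
noncomputable def progProd (M : List (F[X] × (F → ℂ))) (x y : F) : ℂ :=
  (M.map fun p => p.2 (x + p.1.eval y)).prod

@[simp] lemma progProd_nil (x y : F) : progProd [] x y = 1 := rfl

@[simp] lemma progProd_cons (p : F[X] × (F → ℂ)) (M : List (F[X] × (F → ℂ))) (x y : F) :
    progProd (p :: M) x y = p.2 (x + p.1.eval y) * progProd M x y := by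
  simp only [progProd, List.map_cons, List.prod_cons]

lemma progProd_append (M M' : List (F[X] × (F → ℂ))) (x y : F) :
    progProd (M ++ M') x y = progProd M x y * progProd M' x y := by
  simp only [progProd, List.map_append, List.prod_append]

lemma norm_progProd_le_one {M : List (F[X] × (F → ℂ))} (hM : ∀ p ∈ M, ∀ x, ‖p.2 x‖ ≤ 1)
    (x y : F) : ‖progProd M x y‖ ≤ 1 := by
  induction M with
  | nil => simp
  | cons p M ih =>
    rw [List.forall_mem_cons] at hM
    rw [progProd_cons]
    exact norm_mul_le_one (hM.1 _) (ih hM.2)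

/-- The family `M` with `b` subtracted from all polynomials. -/
noncomputable def shiftFamily (b : F[X]) (M : List (F[X] × (F → ℂ))) : List (F[X] × (F → ℂ)) :=
  M.map fun p => (p.1 - b, p.2)

lemma map_fst_shiftFamily (b : F[X]) (M : List (F[X] × (F → ℂ))) :
    (shiftFamily b M).map Prod.fst = (M.map Prod.fst).map (· - b) := by
  simp only [shiftFamily, List.map_map, Function.comp_def]

lemma progProd_shiftFamily (b : F[X]) (M : List (F[X] × (F → ℂ))) (x y : F) :
    progProd (shiftFamily b M) (x + b.eval y) y = progProd M x y := by
  simp only [progProd, shiftFamily, List.map_map, Function.comp_def, eval_sub, add_assoc,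
    add_sub_cancel]

lemma norm_le_one_of_mem_shiftFamily {b : F[X]} {M : List (F[X] × (F → ℂ))}
    (hM : ∀ p ∈ M, ∀ x, ‖p.2 x‖ ≤ 1) : ∀ p ∈ shiftFamily b M, ∀ x, ‖p.2 x‖ ≤ 1 := by
  simp only [shiftFamily, List.forall_mem_map]
  exact hM

variable [Fintype F]

/-- The average over `x` and `y` of `f(x + T(y)) ∏ g(x + Q(y))`, the product running over the
family `M` of pairs `(Q, g)`. -/
noncomputable def progAverage (T : F[X]) (f : F → ℂ) (M : List (F[X] × (F → ℂ))) : ℂ :=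
  𝔼 x, 𝔼 y, f (x + T.eval y) * progProd M x y

lemma norm_progAverage_le_one (T : F[X]) {f : F → ℂ} (hf : ∀ x, ‖f x‖ ≤ 1)
    {M : List (F[X] × (F → ℂ))} (hM : ∀ p ∈ M, ∀ x, ‖p.2 x‖ ≤ 1) : ‖progAverage T f M‖ ≤ 1 :=
  norm_expect_le_one fun x => norm_expect_le_one fun y =>
    norm_mul_le_one (hf _) (norm_progProd_le_one hM x y)

lemma progAverage_nil (T : F[X]) (f : F → ℂ) : progAverage T f [] = 𝔼 x, f x := by
  simp only [progAverage, progProd_nil, mul_one]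
  rw [Finset.expect_comm]
  simp only [expect_add_right, Fintype.expect_const]

lemma progAverage_shiftFamily (b T : F[X]) (f : F → ℂ) (M : List (F[X] × (F → ℂ))) :
    progAverage (T - b) f (shiftFamily b M) = progAverage T f M := by
  simp only [progAverage]
  rw [Finset.expect_comm, Finset.expect_comm (f := fun x y => f (x + T.eval y) * progProd M x y)]
  refine Finset.expect_congr rfl fun y _ => ?_
  rw [← expect_add_right _ (b.eval y)]
  simp only [progProd_shiftFamily, eval_sub, add_assoc, add_sub_cancel]

end PolynomialAverages

section VanDerCorputStep

variable {F : Type*} [Field F]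

/-- The family arising from `(T, f)` and `M` when van der Corput's inequality is applied with the
shift `h`; the function `f` itself is then attached to `taylor h T`. -/
noncomputable def vdcFamily (T : F[X]) (f : F → ℂ) (h : F) (M : List (F[X] × (F → ℂ))) :
    List (F[X] × (F → ℂ)) :=
  (T, fun x => conj (f x)) :: M.flatMap fun p => [(taylor h p.1, p.2), (p.1, fun x => conj (p.2 x))]

/-- The polynomials occurring in `vdcFamily`. -/
noncomputable def vdcPolynomials (T : F[X]) (h : F) (L : List F[X]) : List F[X] :=
  T :: L.flatMap fun Q => [taylor h Q, Q]

lemma map_fst_vdcFamily (T : F[X]) (f : F → ℂ) (h : F) (M : List (F[X] × (F → ℂ))) :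
    (vdcFamily T f h M).map Prod.fst = vdcPolynomials T h (M.map Prod.fst) := by
  simp [vdcFamily, vdcPolynomials, List.map_flatMap, List.flatMap_map]

lemma mem_vdcPolynomials {T Q : F[X]} {h : F} {L : List F[X]} :
    Q ∈ vdcPolynomials T h L ↔ Q = T ∨ ∃ R ∈ L, Q = taylor h R ∨ Q = R := by
  simp only [vdcPolynomials, List.mem_cons, List.mem_flatMap, List.not_mem_nil, or_false]

lemma length_vdcPolynomials (T : F[X]) (h : F) (L : List F[X]) :
    (vdcPolynomials T h L).length = 2 * L.length + 1 := by
  simp [vdcPolynomials, List.length_flatMap, mul_comm]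

lemma norm_le_one_of_mem_vdcFamily {T : F[X]} {f : F → ℂ} (hf : ∀ x, ‖f x‖ ≤ 1) {h : F}
    {M : List (F[X] × (F → ℂ))} (hM : ∀ p ∈ M, ∀ x, ‖p.2 x‖ ≤ 1) :
    ∀ p ∈ vdcFamily T f h M, ∀ x, ‖p.2 x‖ ≤ 1 := by
  simp only [vdcFamily, List.mem_cons, List.mem_flatMap, List.not_mem_nil, or_false]
  rintro p (rfl | ⟨q, hq, rfl | rfl⟩) x
  · simpa only [RCLike.norm_conj] using hf x
  · exact hM q hq x
  · simpa only [RCLike.norm_conj] using hM q hq x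

lemma progProd_vdcFamily (T : F[X]) (f : F → ℂ) (h : F) (M : List (F[X] × (F → ℂ))) (x y : F) :
    progProd (vdcFamily T f h M) x y =
      conj (f (x + T.eval y)) * (progProd M x (y + h) * conj (progProd M x y)) := by
  rw [vdcFamily, progProd_cons]
  congr 1
  induction M with
  | nil => simp
  | cons p M ih =>
    rw [List.flatMap_cons, progProd_append, ih]
    simp only [progProd_cons, progProd_nil, taylor_eval, map_mul]
    ring

open Classical in
/-- The members of `M` with nonconstant polynomials. -/
noncomputable def nonconstant (M : List (F[X] × (F → ℂ))) : List (F[X] × (F → ℂ)) :=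
  M.filter fun p => p.1.natDegree ≠ 0

lemma mem_nonconstant {M : List (F[X] × (F → ℂ))} {p : F[X] × (F → ℂ)} :
    p ∈ nonconstant M ↔ p ∈ M ∧ p.1.natDegree ≠ 0 := by
  simp [nonconstant]

lemma exists_progProd_eq_mul_nonconstant {M : List (F[X] × (F → ℂ))}
    (hM : ∀ p ∈ M, ∀ x, ‖p.2 x‖ ≤ 1) :
    ∃ B : F → ℂ, (∀ x, ‖B x‖ ≤ 1) ∧ ∀ x y, progProd M x y = B x * progProd (nonconstant M) x y := by
  induction M with
  | nil => exact ⟨fun _ => 1, fun x => by simp, fun x y => by simp [nonconstant]⟩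
  | cons p M ih =>
    rw [List.forall_mem_cons] at hM
    obtain ⟨B, hB, progProd_eq⟩ := ih hM.2
    by_cases hp : p.1.natDegree = 0
    · have eval_eq : ∀ y, p.1.eval y = p.1.coeff 0 := fun y => by
        rw [eq_C_of_natDegree_eq_zero hp, eval_C, coeff_C_zero]
      have drop_head : nonconstant (p :: M) = nonconstant M := by
        simp only [nonconstant, List.filter_cons, hp, ne_eq, not_true_eq_false, decide_false,
          Bool.false_eq_true, if_false]
      refine ⟨fun x => p.2 (x + p.1.coeff 0) * B x, fun x => norm_mul_le_one (hM.1 _) (hB x),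
        fun x y => ?_⟩
      rw [progProd_cons, progProd_eq, eval_eq, mul_assoc, drop_head]
    · have keep_head : nonconstant (p :: M) = p :: nonconstant M := by
        simp only [nonconstant, List.filter_cons, hp, ne_eq, not_false_eq_true, decide_true,
          if_true]
      refine ⟨B, hB, fun x y => ?_⟩
      rw [progProd_cons, progProd_eq, keep_head, progProd_cons, mul_left_comm]

variable [Fintype F]

lemma norm_progAverage_sq_le (T : F[X]) (f : F → ℂ) {M : List (F[X] × (F → ℂ))}
    (hM : ∀ p ∈ M, ∀ x, ‖p.2 x‖ ≤ 1) :
    ‖progAverage T f M‖ ^ 2 ≤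
      𝔼 h, ‖progAverage (taylor h T) f (vdcFamily T f h (nonconstant M))‖ := by
  obtain ⟨B, hB, progProd_eq⟩ := exists_progProd_eq_mul_nonconstant hM
  simp only [progAverage, progProd_eq, mul_left_comm _ (B _)]
  refine (norm_expect_mul_sq_le_expect_shift hB _).trans_eq ?_
  simp only [progProd_vdcFamily, taylor_eval, map_mul, mul_assoc, mul_left_comm]

end VanDerCorputStep

section Controls

variable {F : Type*} [Field F] [Fintype F]

/-- The `N`-th Gowers norm of the function `f` attached to `T` controls the average `progAverage`.
A single parameter `N` serves for the order of the norm, the exponent and the error term. -/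
def Controls (N : ℕ) (T : F[X]) (M : List (F[X] × (F → ℂ))) : Prop :=
  ∀ f : F → ℂ, (∀ x, ‖f x‖ ≤ 1) →
    ‖progAverage T f M‖ ^ 4 ^ N ≤ gowers N f + 4 ^ N / Fintype.card F

lemma pow_two_mul_le_gowers_succ {f : F → ℂ} (hf : ∀ x, ‖f x‖ ≤ 1) {K r : ℕ} {x c : ℝ}
    (hx : x ∈ unitInterval) (hc : 0 ≤ c) (h : x ^ K ≤ gowers r f + c) :
    x ^ (2 * K) ≤ gowers (r + 1) f + 3 * c := by
  rcases le_total c 1 with c_le_one | one_le_c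
  · have sq_le : x ^ (2 * K) ≤ (gowers r f + c) ^ 2 := by
      rw [mul_comm, pow_mul]
      exact pow_le_pow_left₀ (pow_nonneg hx.1 _) h 2
    nlinarith [gowers_sq_le_gowers_succ r f, gowers_le_one r hf, gowers_nonneg r f]
  · linarith [pow_le_one₀ (n := 2 * K) hx.1 hx.2, gowers_nonneg (r + 1) f]

lemma norm_progAverage_mem_unitInterval (T : F[X]) {f : F → ℂ} (hf : ∀ x, ‖f x‖ ≤ 1)
    {M : List (F[X] × (F → ℂ))} (hM : ∀ p ∈ M, ∀ x, ‖p.2 x‖ ≤ 1) :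
    ‖progAverage T f M‖ ∈ unitInterval :=
  ⟨norm_nonneg _, norm_progAverage_le_one T hf hM⟩

lemma Controls.mono {N N' : ℕ} {T : F[X]} {M : List (F[X] × (F → ℂ))} (h : Controls N T M)
    (hM : ∀ p ∈ M, ∀ x, ‖p.2 x‖ ≤ 1) (hN : N ≤ N') : Controls N' T M := by
  induction N', hN using Nat.le_induction with
  | base => exact h
  | succ n _ ih =>
    intro f hf
    have mem_unit := norm_progAverage_mem_unitInterval T hf hM
    calc ‖progAverage T f M‖ ^ 4 ^ (n + 1) ≤ ‖progAverage T f M‖ ^ (2 * 4 ^ n) :=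
          pow_le_pow_of_le_one mem_unit.1 mem_unit.2 (by rw [pow_succ]; lia)
      _ ≤ gowers (n + 1) f + 3 * (4 ^ n / Fintype.card F) :=
          pow_two_mul_le_gowers_succ hf mem_unit (by positivity) (ih f hf)
      _ ≤ gowers (n + 1) f + 4 ^ (n + 1) / Fintype.card F := by
          rw [pow_succ, ← mul_div_assoc, mul_comm]
          gcongr
          norm_num

lemma norm_progAverage_pow_le_of_vdcFamily {N : ℕ} {T : F[X]} {f : F → ℂ} (hf : ∀ x, ‖f x‖ ≤ 1)
    {M : List (F[X] × (F → ℂ))} (hM : ∀ p ∈ M, ∀ x, ‖p.2 x‖ ≤ 1) (S : Finset F)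
    (h : ∀ a ∉ S, Controls N (taylor a T) (vdcFamily T f a (nonconstant M))) :
    ‖progAverage T f M‖ ^ (2 * 4 ^ N) ≤ gowers N f + (4 ^ N + S.card) / Fintype.card F := by
  classical
  have vdc_le_one : ∀ a, ∀ p ∈ vdcFamily T f a (nonconstant M), ∀ x, ‖p.2 x‖ ≤ 1 := fun a =>
    norm_le_one_of_mem_vdcFamily hf fun p hp => hM p (mem_nonconstant.1 hp).1
  rw [pow_mul]
  calc (‖progAverage T f M‖ ^ 2) ^ 4 ^ N
      ≤ (𝔼 a, ‖progAverage (taylor a T) f (vdcFamily T f a (nonconstant M))‖) ^ 4 ^ N :=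
        pow_le_pow_left₀ (sq_nonneg _) (norm_progAverage_sq_le T f hM) _
    _ ≤ 𝔼 a, ‖progAverage (taylor a T) f (vdcFamily T f a (nonconstant M))‖ ^ 4 ^ N :=
        expect_pow_le (fun _ => norm_nonneg _) _
    _ ≤ 𝔼 a, ((gowers N f + 4 ^ N / Fintype.card F) + if a ∈ S then 1 else 0) := by
        refine Finset.expect_le_expect fun a _ => ?_
        split_ifs with ha
        · have pow_le :
              ‖progAverage (taylor a T) f (vdcFamily T f a (nonconstant M))‖ ^ 4 ^ N ≤ 1 :=
            pow_le_one₀ (norm_nonneg _) (norm_progAverage_le_one _ hf (vdc_le_one a))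
          have gowers_nonneg := gowers_nonneg N f
          have error_nonneg : (0 : ℝ) ≤ 4 ^ N / Fintype.card F := by positivity
          linarith
        · rw [add_zero]
          exact h a ha f hf
    _ = gowers N f + (4 ^ N + S.card) / Fintype.card F := by
        rw [Finset.expect_add_distrib, Fintype.expect_const, Fintype.expect_eq_sum_div_card,
          Finset.sum_ite_mem, Finset.univ_inter, Finset.sum_const, nsmul_one]
        ring

lemma three_mul_le_four_pow (m : ℕ) : 3 * m ≤ 4 ^ m := by
  induction m with
  | zero => simp
  | succ m ih => have := Nat.one_le_pow m 4 (by norm_num); rw [pow_succ]; lia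

lemma Controls.of_vdcFamily {N : ℕ} {T : F[X]} {M : List (F[X] × (F → ℂ))}
    (hM : ∀ p ∈ M, ∀ x, ‖p.2 x‖ ≤ 1) (S : Finset F) (hS : S.card ≤ N)
    (h : ∀ f : F → ℂ, (∀ x, ‖f x‖ ≤ 1) → ∀ a ∉ S,
      Controls N (taylor a T) (vdcFamily T f a (nonconstant M))) :
    Controls (N + 1) T M := by
  intro f hf
  have mem_unit := norm_progAverage_mem_unitInterval T hf hM
  have card_le : (3 * S.card : ℝ) ≤ 4 ^ N := by
    exact_mod_cast (three_mul_le_four_pow _).trans (Nat.pow_le_pow_right (by norm_num) hS)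
  calc ‖progAverage T f M‖ ^ 4 ^ (N + 1) = ‖progAverage T f M‖ ^ (2 * (2 * 4 ^ N)) := by
        congr 1; ring
    _ ≤ gowers (N + 1) f + 3 * ((4 ^ N + S.card) / Fintype.card F) :=
        pow_two_mul_le_gowers_succ hf mem_unit (by positivity)
          (norm_progAverage_pow_le_of_vdcFamily hf hM S (h f hf))
    _ ≤ gowers (N + 1) f + 4 ^ (N + 1) / Fintype.card F := by
        rw [← mul_div_assoc]
        gcongr
        rw [pow_succ]
        linarith

end Controls

section LinearFamilies

variable {F : Type*} [Field F]

lemma eval_add_of_natDegree_le_one {Q : F[X]} (hQ : Q.natDegree ≤ 1) (y h : F) :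
    Q.eval (y + h) = Q.eval y + Q.coeff 1 * h := by
  rw [eq_X_add_C_of_natDegree_le_one hQ]
  simp only [eval_add, eval_mul, eval_C, eval_X, coeff_add, coeff_C_mul, coeff_X_one, coeff_C_succ]
  ring

/-- The family arising from `M` by van der Corput's inequality when all its polynomials are linear:
a shift `h` of the variable replaces each function by a multiplicative derivative. -/
noncomputable def derivFamily (h : F) (M : List (F[X] × (F → ℂ))) : List (F[X] × (F → ℂ)) :=
  M.map fun q => (q.1, mulDeriv (q.1.coeff 1 * h) q.2)

lemma progProd_derivFamily {M : List (F[X] × (F → ℂ))} (hM : ∀ q ∈ M, q.1.natDegree ≤ 1)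
    (h x y : F) :
    progProd (derivFamily h M) x y = progProd M x (y + h) * conj (progProd M x y) := by
  induction M with
  | nil => simp [derivFamily]
  | cons q M ih =>
    rw [List.forall_mem_cons] at hM
    rw [derivFamily, List.map_cons, progProd_cons, ← derivFamily, ih hM.2, progProd_cons,
      progProd_cons, eval_add_of_natDegree_le_one hM.1, map_mul, mul_mul_mul_comm]
    simp only [mulDeriv, add_assoc]

variable [Fintype F]

lemma norm_progAverage_cons_zero_sq_le {T : F[X]} (hT : T.natDegree ≤ 1) (f : F → ℂ) {g : F → ℂ}
    (hg : ∀ x, ‖g x‖ ≤ 1) {M : List (F[X] × (F → ℂ))} (hM : ∀ q ∈ M, q.1.natDegree ≤ 1) :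
    ‖progAverage T f ((0, g) :: M)‖ ^ 2 ≤
      𝔼 h, ‖progAverage T (mulDeriv (T.coeff 1 * h) f) (derivFamily h M)‖ := by
  simp only [progAverage, progProd_cons, eval_zero, add_zero, mul_left_comm _ (g _)]
  refine (norm_expect_mul_sq_le_expect_shift hg _).trans_eq ?_
  simp only [progProd_derivFamily hM, eval_add_of_natDegree_le_one hT, map_mul, mulDeriv, add_assoc]
  simp_rw [mul_mul_mul_comm]

lemma norm_progAverage_pow_le_gowers_length {T : F[X]} {M : List (F[X] × (F → ℂ))}
    (hM : ∀ p ∈ M, ∀ x, ‖p.2 x‖ ≤ 1) (hdeg : ∀ p ∈ M, (T - p.1).natDegree = 1) {f : F → ℂ}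
    (hf : ∀ x, ‖f x‖ ≤ 1) :
    ‖progAverage T f M‖ ^ (2 * 2 ^ M.length) ≤ gowers M.length f := by
  induction hlen : M.length generalizing T M f with
  | zero =>
    rw [List.length_eq_zero_iff.1 hlen, progAverage_nil, pow_zero, mul_one]
    exact le_rfl
  | succ n ih =>
    obtain ⟨⟨b, g⟩, M, rfl⟩ := List.exists_cons_of_length_eq_add_one hlen
    rw [List.forall_mem_cons] at hM hdeg
    have hT : (T - b).natDegree = 1 := hdeg.1
    have hshift : ∀ q ∈ shiftFamily b M, (T - b - q.1).natDegree = 1 := by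
      simpa only [shiftFamily, List.forall_mem_map, sub_sub_sub_cancel_right] using hdeg.2
    have linear : ∀ q ∈ shiftFamily b M, q.1.natDegree ≤ 1 := fun q hq => by
      rw [← sub_sub_cancel (T - b) q.1]
      exact (natDegree_sub_le _ _).trans (by rw [hT, hshift q hq, max_self])
    have slope_ne_zero : (T - b).coeff 1 ≠ 0 := by
      rw [← hT]
      exact leadingCoeff_ne_zero.2 (ne_zero_of_natDegree_gt (n := 0) (by lia))
    have ih_deriv : ∀ h, ‖progAverage (T - b) (mulDeriv ((T - b).coeff 1 * h) f)
        (derivFamily h (shiftFamily b M))‖ ^ (2 * 2 ^ n) ≤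
          gowers n (mulDeriv ((T - b).coeff 1 * h) f) := fun h => by
      refine ih ?_ ?_ (norm_mulDeriv_le_one hf _) ?_
      · simp only [derivFamily, List.forall_mem_map]
        exact fun q hq => norm_mulDeriv_le_one (norm_le_one_of_mem_shiftFamily hM.2 q hq) _
      · simpa only [derivFamily, List.forall_mem_map] using hshift
      · simpa [derivFamily, shiftFamily] using hlen
    rw [← progAverage_shiftFamily b]
    calc _ = (‖progAverage (T - b) f ((0, g) :: shiftFamily b M)‖ ^ 2) ^ (2 * 2 ^ n) := by
          rw [shiftFamily, List.map_cons, sub_self, ← shiftFamily, ← pow_mul, pow_succ,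
            mul_comm _ 2]
      _ ≤ _ := pow_le_pow_left₀ (sq_nonneg _)
          (norm_progAverage_cons_zero_sq_le hT.le f hM.1 linear) _
      _ ≤ _ := expect_pow_le (fun _ => norm_nonneg _) _
      _ ≤ 𝔼 h, gowers n (mulDeriv ((T - b).coeff 1 * h) f) :=
          Finset.expect_le_expect fun h _ => ih_deriv h
      _ = gowers (n + 1) f := Fintype.expect_equiv (Equiv.mulLeft₀ _ slope_ne_zero) _ _ fun _ => rfl

lemma controls_of_natDegree_sub_eq_one {T : F[X]} {M : List (F[X] × (F → ℂ))}
    (hM : ∀ p ∈ M, ∀ x, ‖p.2 x‖ ≤ 1) (hdeg : ∀ p ∈ M, (T - p.1).natDegree = 1) :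
    Controls (M.length + 1) T M := by
  intro f hf
  have mem_unit := norm_progAverage_mem_unitInterval T hf hM
  calc ‖progAverage T f M‖ ^ 4 ^ (M.length + 1)
      ≤ ‖progAverage T f M‖ ^ (2 * (2 * 2 ^ M.length)) := by
        refine pow_le_pow_of_le_one mem_unit.1 mem_unit.2 ?_
        have : 2 ^ M.length ≤ 4 ^ M.length := Nat.pow_le_pow_left (by norm_num) _
        rw [pow_succ]
        lia
    _ ≤ gowers (M.length + 1) f + 3 * 0 := by
        refine pow_two_mul_le_gowers_succ hf mem_unit le_rfl ?_
        rw [add_zero]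
        exact norm_progAverage_pow_le_gowers_length hM hdeg hf
    _ ≤ _ := by rw [mul_zero]; gcongr; positivity

end LinearFamilies

section TaylorShifts

variable {F : Type*} [Field F]

lemma natCast_ne_zero_of_lt_ringChar {j : ℕ} (hj : j ≠ 0) (h : j < ringChar F) : (j : F) ≠ 0 :=
  fun h_zero => hj (Nat.eq_zero_of_dvd_of_lt ((ringChar.spec F j).1 h_zero) h)

lemma coeff_taylor_of_natDegree_le {Q : F[X]} {D : ℕ} (hQ : Q.natDegree ≤ D) (h : F) :
    (taylor h Q).coeff D = Q.coeff D := by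
  rcases hQ.lt_or_eq with hlt | rfl
  · rw [coeff_eq_zero_of_natDegree_lt hlt,
      coeff_eq_zero_of_natDegree_lt (by rwa [natDegree_taylor])]
  · rw [coeff_taylor_natDegree, leadingCoeff]

lemma coeff_taylor_of_natDegree_le_succ {T : F[X]} {d : ℕ} (hT : T.natDegree ≤ d + 1) (h : F) :
    (taylor h T).coeff d = T.coeff d + (d + 1) * T.coeff (d + 1) * h := by
  have natDegree_le := natDegree_hasseDeriv_le T d
  rw [taylor_coeff, eval_eq_sum_range' (n := 2) (by lia)]
  simp [Finset.sum_range_succ, hasseDeriv_coeff, add_comm 1 d]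

lemma eq_of_natDegree_taylor_sub_eq_zero {T Q : F[X]} (hT : 2 ≤ T.natDegree)
    (hF : T.natDegree < ringChar F) {h h' : F} (hh : (taylor h T - Q).natDegree = 0)
    (hh' : (taylor h' T - Q).natDegree = 0) : h = h' := by
  obtain ⟨d, hd⟩ : ∃ d, T.natDegree = d + 1 := ⟨T.natDegree - 1, by lia⟩
  have coeff_eq_zero : ∀ a, (taylor a T - Q).natDegree = 0 →
      T.coeff d + (d + 1) * T.coeff (d + 1) * a - Q.coeff d = 0 := fun a ha => by
    rw [← coeff_taylor_of_natDegree_le_succ hd.le, ← coeff_sub,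
      coeff_eq_zero_of_natDegree_lt (by lia)]
  have lead_ne_zero : T.coeff (d + 1) ≠ 0 := by
    rw [← hd]
    exact leadingCoeff_ne_zero.2 (ne_zero_of_natDegree_gt (n := 0) (by lia))
  have cast_ne_zero : (d + 1 : F) ≠ 0 := by
    exact_mod_cast natCast_ne_zero_of_lt_ringChar d.succ_ne_zero (hd.symm.trans_lt hF)
  refine sub_eq_zero.1 ((mul_eq_zero.1 ?_).resolve_left (mul_ne_zero cast_ne_zero lead_ne_zero))
  linear_combination coeff_eq_zero h hh - coeff_eq_zero h' hh'

lemma exists_natDegree_taylor_sub_ne_zero [Finite F] {T : F[X]} (hT : 2 ≤ T.natDegree)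
    (hF : T.natDegree < ringChar F) (L : List F[X]) :
    ∃ S : Finset F, S.card ≤ L.length ∧ ∀ h ∉ S, ∀ Q ∈ L, (taylor h T - Q).natDegree ≠ 0 := by
  classical
  cases nonempty_fintype F
  refine ⟨L.toFinset.biUnion fun Q => {h | (taylor h T - Q).natDegree = 0}, ?_, ?_⟩
  · refine (Finset.card_biUnion_le_card_mul _ _ 1 fun Q _ => Finset.card_le_one.2 ?_).trans ?_
    · intro a ha b hb
      rw [Finset.mem_filter] at ha hb
      exact eq_of_natDegree_taylor_sub_eq_zero hT hF ha.2 hb.2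
    · rw [mul_one]
      exact L.toFinset_card_le
  · intro h hh Q hQ h_zero
    exact hh (Finset.mem_biUnion.2 ⟨Q, List.mem_toFinset.2 hQ, by simpa using h_zero⟩)

lemma exists_mem_of_mem_vdcPolynomials {T Q : F[X]} {h : F} {L : List F[X]}
    (hQ : Q ∈ taylor h T :: vdcPolynomials T h L) : ∃ R ∈ T :: L, Q = taylor h R ∨ Q = R := by
  rw [List.mem_cons, mem_vdcPolynomials] at hQ
  rcases hQ with rfl | rfl | ⟨R, hR, hQR⟩
  · exact ⟨T, List.mem_cons_self, Or.inl rfl⟩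
  · exact ⟨Q, List.mem_cons_self, Or.inr rfl⟩
  · exact ⟨R, List.mem_cons_of_mem _ hR, hQR⟩

end TaylorShifts

section LeadingCoefficients

variable {F : Type*} [Field F]

open Classical in
/-- The leading coefficients of the members of degree `j` of a list of polynomials. Their number,
for each `j`, is the complexity of a system of polynomials in the induction on polynomials. -/
noncomputable def leadingCoeffs (j : ℕ) (L : List F[X]) : Finset F :=
  ((L.filter fun Q => Q.natDegree = j).map leadingCoeff).toFinset

lemma mem_leadingCoeffs {j : ℕ} {L : List F[X]} {a : F} :
    a ∈ leadingCoeffs j L ↔ ∃ Q ∈ L, Q.natDegree = j ∧ Q.leadingCoeff = a := by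
  simp only [leadingCoeffs, List.mem_toFinset, List.mem_map, List.mem_filter, decide_eq_true_eq,
    and_assoc]

lemma leadingCoeffs_mono {j : ℕ} {L L' : List F[X]} (h : L ⊆ L') :
    leadingCoeffs j L ⊆ leadingCoeffs j L' := fun a ha => by
  obtain ⟨Q, hQ, hQa⟩ := mem_leadingCoeffs.1 ha
  exact mem_leadingCoeffs.2 ⟨Q, h hQ, hQa⟩

lemma card_leadingCoeffs_le_length (j : ℕ) (L : List F[X]) :
    (leadingCoeffs j L).card ≤ L.length := by
  classical
  refine (List.toFinset_card_le _).trans ?_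
  rw [List.length_map]
  exact List.length_filter_le _ _

lemma leadingCoeffs_vdcPolynomials_subset (j : ℕ) (T : F[X]) (h : F) (L : List F[X]) :
    leadingCoeffs j (taylor h T :: vdcPolynomials T h L) ⊆ leadingCoeffs j (T :: L) := by
  intro a ha
  obtain ⟨Q, hQ, hQa⟩ := mem_leadingCoeffs.1 ha
  obtain ⟨R, hR, rfl | rfl⟩ := exists_mem_of_mem_vdcPolynomials hQ
  · rw [natDegree_taylor, leadingCoeff_taylor] at hQa
    exact mem_leadingCoeffs.2 ⟨R, hR, hQa⟩
  · exact mem_leadingCoeffs.2 ⟨Q, hR, hQa⟩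

lemma leadingCoeffs_map_sub_subset {b : F[X]} {j : ℕ} (hj : b.natDegree < j) (L : List F[X]) :
    leadingCoeffs j (L.map (· - b)) ⊆ leadingCoeffs j L := by
  intro a ha
  obtain ⟨Q', hQ', hdeg, rfl⟩ := mem_leadingCoeffs.1 ha
  obtain ⟨Q, hQ, rfl⟩ := List.mem_map.1 hQ'
  have natDegree_lt : b.natDegree < Q.natDegree :=
    ((lt_max_iff.1 (hj.trans_le (hdeg ▸ natDegree_sub_le Q b)))).resolve_right (lt_irrefl _)
  refine mem_leadingCoeffs.2 ⟨Q, hQ, ?_, ?_⟩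
  · rw [← hdeg, natDegree_sub_eq_left_of_natDegree_lt natDegree_lt]
  · rw [leadingCoeff_sub_of_degree_lt (degree_lt_degree natDegree_lt)]

lemma card_leadingCoeffs_map_sub_lt {b : F[X]} {L : List F[X]} (hb : b ∈ L)
    (hb0 : b.natDegree ≠ 0) (hL : ∀ Q ∈ L, b.natDegree ≤ Q.natDegree) :
    (leadingCoeffs b.natDegree (L.map (· - b))).card < (leadingCoeffs b.natDegree L).card := by
  classical
  have subset_image : leadingCoeffs b.natDegree (L.map (· - b)) ⊆
      ((leadingCoeffs b.natDegree L).erase b.leadingCoeff).image (· - b.leadingCoeff) := by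
    intro a ha
    obtain ⟨Q', hQ', hdeg, rfl⟩ := mem_leadingCoeffs.1 ha
    obtain ⟨Q, hQ, rfl⟩ := List.mem_map.1 hQ'
    have natDegree_eq : Q.natDegree = b.natDegree := by
      by_contra hne
      have := hL Q hQ
      rw [natDegree_sub_eq_left_of_natDegree_lt (by lia)] at hdeg
      exact hne hdeg
    have lead_eq : (Q - b).leadingCoeff = Q.leadingCoeff - b.leadingCoeff := by
      simp only [leadingCoeff, hdeg, coeff_sub, natDegree_eq]
    have lead_ne_zero : (Q - b).leadingCoeff ≠ 0 :=
      leadingCoeff_ne_zero.2 (ne_zero_of_natDegree_gt (n := 0) (by lia))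
    rw [lead_eq] at lead_ne_zero ⊢
    exact Finset.mem_image_of_mem (· - b.leadingCoeff) (Finset.mem_erase.2
      ⟨sub_ne_zero.1 lead_ne_zero, mem_leadingCoeffs.2 ⟨Q, hQ, natDegree_eq, rfl⟩⟩)
  exact ((Finset.card_le_card subset_image).trans Finset.card_image_le).trans_lt
    (Finset.card_erase_lt_of_mem (mem_leadingCoeffs.2 ⟨b, hb, rfl, rfl⟩))

end LeadingCoefficients

section Descent

variable {F : Type*} [Field F]

/-- At most `n` polynomials whose differences with `T` are nonconstant of degree at most `D`. -/
structure IsDifferenceSystem (n D : ℕ) (T : F[X]) (L : List F[X]) : Prop where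
  length_le : L.length ≤ n
  natDegree_sub_ne_zero : ∀ Q ∈ L, (T - Q).natDegree ≠ 0
  natDegree_sub_le : ∀ Q ∈ L, (T - Q).natDegree ≤ D

/-- At most `n` polynomials of degree at most `D`, none differing from `T` by a constant, where `T`
has degree `D` and there are at most `v j` leading coefficients in degree `j`. -/
structure IsLeadingSystem (n D : ℕ) (v : Fin (D + 1) → ℕ) (T : F[X]) (L : List F[X]) : Prop where
  length_le : L.length ≤ n
  natDegree_sub_ne_zero : ∀ Q ∈ L, (T - Q).natDegree ≠ 0
  natDegree_eq : T.natDegree = D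
  natDegree_le : ∀ Q ∈ L, Q.natDegree ≤ D
  card_leadingCoeffs_le : ∀ j : Fin (D + 1), (leadingCoeffs j (T :: L)).card ≤ v j

/-- The complexity after a van der Corput step and subtraction of a polynomial of degree `e` from a
system of `n` polynomials of complexity `v`; it precedes `v` in the reverse lexicographic order. -/
def descend {D : ℕ} (n : ℕ) (v : Fin (D + 1) → ℕ) (e j : Fin (D + 1)) : ℕ :=
  if j < e then 2 * n + 2 else if j = e then v e - 1 else v j

variable {n D : ℕ} {v : Fin (D + 1) → ℕ} {T : F[X]} {L : List F[X]}

lemma IsLeadingSystem.sublist {L' : List F[X]} (hL : IsLeadingSystem n D v T L)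
    (h : List.Sublist L' L) : IsLeadingSystem n D v T L' where
  length_le := h.length_le.trans hL.length_le
  natDegree_sub_ne_zero := fun Q hQ => hL.natDegree_sub_ne_zero Q (h.subset hQ)
  natDegree_eq := hL.natDegree_eq
  natDegree_le := fun Q hQ => hL.natDegree_le Q (h.subset hQ)
  card_leadingCoeffs_le := fun j => (Finset.card_le_card
    (leadingCoeffs_mono (h.cons_cons T).subset)).trans (hL.card_leadingCoeffs_le j)

namespace IsLeadingSystem

lemma length_vdcPolynomials_le (hL : IsLeadingSystem n D v T L) (h : F) :
    (vdcPolynomials T h L).length ≤ 2 * n + 1 := by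
  rw [length_vdcPolynomials]
  have := hL.length_le
  lia

lemma natDegree_taylor_sub_ne_zero (hL : IsLeadingSystem n D v T L) {h : F}
    (hh : ∀ Q ∈ T :: L, (taylor h T - Q).natDegree ≠ 0) {Q : F[X]}
    (hQ : Q ∈ vdcPolynomials T h L) : (taylor h T - Q).natDegree ≠ 0 := by
  rcases mem_vdcPolynomials.1 hQ with rfl | ⟨R, hR, rfl | rfl⟩
  · exact hh _ List.mem_cons_self
  · rw [← map_sub, natDegree_taylor]
    exact hL.natDegree_sub_ne_zero R hR
  · exact hh _ (List.mem_cons_of_mem _ hR)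

lemma natDegree_le_of_mem_cons (hL : IsLeadingSystem n D v T L) {Q : F[X]} (hQ : Q ∈ T :: L) :
    Q.natDegree ≤ D := by
  rcases List.mem_cons.1 hQ with rfl | hQ
  · exact hL.natDegree_eq.le
  · exact hL.natDegree_le Q hQ

lemma natDegree_le_of_mem_vdcPolynomials (hL : IsLeadingSystem n D v T L) {h : F} {Q : F[X]}
    (hQ : Q ∈ taylor h T :: vdcPolynomials T h L) : Q.natDegree ≤ D := by
  obtain ⟨R, hR, rfl | rfl⟩ := exists_mem_of_mem_vdcPolynomials hQ
  · exact (natDegree_taylor R h).trans_le (hL.natDegree_le_of_mem_cons hR)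
  · exact hL.natDegree_le_of_mem_cons hR

lemma coeff_taylor (hL : IsLeadingSystem n D v T L) (h : F) :
    (taylor h T).coeff D = T.coeff D :=
  coeff_taylor_of_natDegree_le hL.natDegree_eq.le h

lemma isDifferenceSystem_vdcPolynomials (hL : IsLeadingSystem n D v T L)
    (hlead : ∀ Q ∈ L, Q.coeff D = T.coeff D) {h : F}
    (hh : ∀ Q ∈ T :: L, (taylor h T - Q).natDegree ≠ 0) :
    IsDifferenceSystem (2 * n + 1) (D - 1) (taylor h T) (vdcPolynomials T h L) where
  length_le := hL.length_vdcPolynomials_le h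
  natDegree_sub_ne_zero := fun Q hQ => hL.natDegree_taylor_sub_ne_zero hh hQ
  natDegree_sub_le := fun Q hQ => by
    have coeff_eq : Q.coeff D = T.coeff D := by
      rcases mem_vdcPolynomials.1 hQ with rfl | ⟨R, hR, rfl | rfl⟩
      · rfl
      · rw [coeff_taylor_of_natDegree_le (hL.natDegree_le R hR), hlead R hR]
      · exact hlead Q hR
    refine natDegree_le_pred ((natDegree_sub_le _ _).trans (max_le ?_ ?_)) ?_
    · exact hL.natDegree_le_of_mem_vdcPolynomials List.mem_cons_self
    · exact hL.natDegree_le_of_mem_vdcPolynomials (List.mem_cons_of_mem _ hQ)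
    · rw [coeff_sub, hL.coeff_taylor, coeff_eq, sub_self]

lemma exists_natDegree_minimal (hL : IsLeadingSystem n D v T L) (hD : D ≠ 0)
    (hlead : ∃ Q ∈ L, Q.coeff D ≠ T.coeff D) :
    ∃ b ∈ L, b.coeff D ≠ T.coeff D ∧ ∀ Q ∈ T :: L, b.natDegree ≤ Q.natDegree := by
  classical
  have exists_degree : ∃ d, ∃ b ∈ L, b.coeff D ≠ T.coeff D ∧ b.natDegree = d :=
    let ⟨Q, hQ, hQT⟩ := hlead
    ⟨_, Q, hQ, hQT, rfl⟩
  obtain ⟨b, hb, hbT, hbdeg⟩ := Nat.find_spec exists_degree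
  have lead_ne_zero : T.coeff D ≠ 0 := by
    rw [← hL.natDegree_eq]
    exact leadingCoeff_ne_zero.2 (ne_zero_of_natDegree_gt (n := 0)
      (by have := hL.natDegree_eq; lia))
  refine ⟨b, hb, hbT, fun Q hQ => ?_⟩
  by_cases hQT : Q.coeff D = T.coeff D
  · exact (hL.natDegree_le b hb).trans (le_natDegree_of_ne_zero (hQT ▸ lead_ne_zero))
  · rw [hbdeg]
    refine Nat.find_min' exists_degree ⟨Q, (List.mem_cons.1 hQ).resolve_left ?_, hQT, rfl⟩
    rintro rfl
    exact hQT rfl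

lemma map_sub_vdcPolynomials (hL : IsLeadingSystem n D v T L) {h : F}
    (hh : ∀ Q ∈ T :: L, (taylor h T - Q).natDegree ≠ 0) {b : F[X]} (hb : b ∈ L)
    (hbT : b.coeff D ≠ T.coeff D) (hb0 : b.natDegree ≠ 0)
    (hmin : ∀ Q ∈ T :: L, b.natDegree ≤ Q.natDegree) {e : Fin (D + 1)} (he : b.natDegree = e) :
    IsLeadingSystem (2 * n + 1) D (descend n v e) (taylor h T - b)
      ((vdcPolynomials T h L).map (· - b)) := by
  have sub_natDegree_le : ∀ Q ∈ taylor h T :: vdcPolynomials T h L, (Q - b).natDegree ≤ D :=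
    fun Q hQ => (natDegree_sub_le _ _).trans
      (max_le (hL.natDegree_le_of_mem_vdcPolynomials hQ) (hL.natDegree_le b hb))
  have length_le := hL.length_vdcPolynomials_le h
  refine ⟨by rwa [List.length_map], ?_, ?_, ?_, fun j => ?_⟩
  · simpa only [List.forall_mem_map, sub_sub_sub_cancel_right] using
      fun Q hQ => hL.natDegree_taylor_sub_ne_zero hh hQ
  · refine natDegree_eq_of_le_of_coeff_ne_zero (sub_natDegree_le _ List.mem_cons_self) ?_
    rw [coeff_sub, hL.coeff_taylor]
    exact sub_ne_zero.2 hbT.symm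
  · simpa only [List.forall_mem_map] using
      fun Q hQ => sub_natDegree_le Q (List.mem_cons_of_mem _ hQ)
  have card_le : (leadingCoeffs j (taylor h T :: vdcPolynomials T h L)).card ≤ v j :=
    (Finset.card_le_card (leadingCoeffs_vdcPolynomials_subset _ _ _ _)).trans
      (hL.card_leadingCoeffs_le j)
  change (leadingCoeffs j ((taylor h T :: vdcPolynomials T h L).map (· - b))).card ≤ _
  unfold descend
  split_ifs with hlt heq
  · refine (card_leadingCoeffs_le_length _ _).trans ?_
    rw [List.length_map, List.length_cons]
    lia
  · subst heq
    rw [← he] at card_le ⊢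
    refine Nat.le_sub_one_of_lt ((card_leadingCoeffs_map_sub_lt ?_ hb0 ?_).trans_le card_le)
    · exact List.mem_cons_of_mem _ (mem_vdcPolynomials.2 (Or.inr ⟨b, hb, Or.inr rfl⟩))
    · intro Q hQ
      obtain ⟨R, hR, rfl | rfl⟩ := exists_mem_of_mem_vdcPolynomials hQ
      · exact (natDegree_taylor R h).symm ▸ hmin R hR
      · exact hmin Q hR
  · have e_lt_j : b.natDegree < j := by
      rw [he]
      exact lt_of_le_of_ne (not_lt.1 hlt) (Fin.val_ne_of_ne (Ne.symm heq))
    exact (Finset.card_le_card (leadingCoeffs_map_sub_subset e_lt_j _)).trans card_le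

end IsLeadingSystem

end Descent

section UniformControl

universe u

/-- The families whose polynomials satisfy `𝒮` are controlled by one and the same Gowers norm over
all finite fields of characteristic greater than `D`. -/
def UniformlyControlled (D : ℕ) (𝒮 : ∀ (F : Type u) [Field F], F[X] → List F[X] → Prop) : Prop :=
  ∃ N, ∀ (F : Type u) [Field F] [Fintype F], D < ringChar F →
    ∀ (T : F[X]) (M : List (F[X] × (F → ℂ))), (∀ p ∈ M, ∀ x, ‖p.2 x‖ ≤ 1) →
      𝒮 F T (M.map Prod.fst) → Controls N T M

lemma controls_shiftFamily {F : Type*} [Field F] [Fintype F] {N : ℕ} {b T : F[X]}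
    {M : List (F[X] × (F → ℂ))} : Controls N (T - b) (shiftFamily b M) ↔ Controls N T M := by
  simp only [Controls, progAverage_shiftFamily]

lemma uniformlyControlled_isDifferenceSystem_of_le_one (n : ℕ) {D : ℕ} (hD : D ≤ 1) :
    UniformlyControlled.{u} D fun _ _ => IsDifferenceSystem n D := by
  refine ⟨n + 1, fun F _ _ _ T M hM hT => ?_⟩
  have natDegree_eq_one : ∀ p ∈ M, (T - p.1).natDegree = 1 := fun p hp => by
    have ne_zero := hT.natDegree_sub_ne_zero p.1 (List.mem_map_of_mem hp)
    have le_one := (hT.natDegree_sub_le p.1 (List.mem_map_of_mem hp)).trans hD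
    lia
  have length_le := hT.length_le
  rw [List.length_map] at length_le
  exact (controls_of_natDegree_sub_eq_one hM natDegree_eq_one).mono hM (by lia)

lemma IsLeadingSystem.vdcPolynomials_cases {F : Type*} [Field F] {n D : ℕ} {v : Fin (D + 1) → ℕ}
    {T : F[X]} {L : List F[X]} (hL : IsLeadingSystem n D v T L) (hD : D ≠ 0)
    (hL0 : ∀ Q ∈ L, Q.natDegree ≠ 0) {h : F}
    (hh : ∀ Q ∈ T :: L, (taylor h T - Q).natDegree ≠ 0) :
    IsDifferenceSystem (2 * n + 1) (D - 1) (taylor h T) (vdcPolynomials T h L) ∨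
      ∃ e b, v e ≠ 0 ∧ IsLeadingSystem (2 * n + 1) D (descend n v e) (taylor h T - b)
        ((vdcPolynomials T h L).map (· - b)) := by
  by_cases hlead : ∀ Q ∈ L, Q.coeff D = T.coeff D
  · exact Or.inl (hL.isDifferenceSystem_vdcPolynomials hlead hh)
  push Not at hlead
  obtain ⟨b, hb, hbT, hmin⟩ := hL.exists_natDegree_minimal hD hlead
  let e : Fin (D + 1) := ⟨b.natDegree, Nat.lt_succ_of_le (hL.natDegree_le b hb)⟩
  have lead_mem : b.leadingCoeff ∈ leadingCoeffs e (T :: L) :=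
    mem_leadingCoeffs.2 ⟨b, List.mem_cons_of_mem _ hb, rfl, rfl⟩
  have e_pos : v e ≠ 0 :=
    ((Finset.card_pos.2 ⟨_, lead_mem⟩).trans_le (hL.card_leadingCoeffs_le e)).ne'
  exact Or.inr ⟨e, b, e_pos, hL.map_sub_vdcPolynomials hh hb hbT (hL0 b hb) hmin rfl⟩

lemma uniformlyControlled_isLeadingSystem_of_descend {n D : ℕ} (hD : 2 ≤ D) {v : Fin (D + 1) → ℕ}
    (hdiff : UniformlyControlled.{u} (D - 1) fun _ _ => IsDifferenceSystem (2 * n + 1) (D - 1))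
    (hlead : ∀ e, v e ≠ 0 →
      UniformlyControlled.{u} D fun _ _ => IsLeadingSystem (2 * n + 1) D (descend n v e)) :
    UniformlyControlled.{u} D fun _ _ => IsLeadingSystem n D v := by
  obtain ⟨N₁, controls_diff⟩ := hdiff
  choose! N₂ controls_lead using hlead
  let N := max N₁ (max (Finset.univ.sup N₂) (n + 1))
  have N₁_le : N₁ ≤ N := le_max_left _ _
  have N₂_le : ∀ e, N₂ e ≤ N := fun e =>
    (Finset.le_sup (Finset.mem_univ e)).trans ((le_max_left _ _).trans (le_max_right _ _))
  have succ_le : n + 1 ≤ N := (le_max_right _ _).trans (le_max_right _ _)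
  refine ⟨N + 1, fun F _ _ hF T M hM hT => ?_⟩
  have hT' : IsLeadingSystem n D v T ((nonconstant M).map Prod.fst) :=
    hT.sublist (List.filter_sublist.map _)
  have nonconstant_ne_zero : ∀ Q ∈ (nonconstant M).map Prod.fst, Q.natDegree ≠ 0 :=
    List.forall_mem_map.2 fun p hp => (mem_nonconstant.1 hp).2
  obtain ⟨S, card_S, hS⟩ := exists_natDegree_taylor_sub_ne_zero (hD.trans_eq hT.natDegree_eq.symm)
    (hT.natDegree_eq.trans_lt hF) (T :: (nonconstant M).map Prod.fst)
  refine Controls.of_vdcFamily hM S ?_ fun f hf h hh => ?_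
  · have := hT'.length_le
    rw [List.length_cons] at card_S
    lia
  have vdc_le_one := norm_le_one_of_mem_vdcFamily (T := T) (h := h) hf
    fun p hp => hM p (mem_nonconstant.1 hp).1
  rcases hT'.vdcPolynomials_cases (by lia) nonconstant_ne_zero (hS h hh) with
    hdiff | ⟨e, b, he, hlead⟩
  · rw [← map_fst_vdcFamily T f h] at hdiff
    exact (controls_diff F (by lia) _ _ vdc_le_one hdiff).mono vdc_le_one N₁_le
  · rw [← map_fst_vdcFamily T f h, ← map_fst_shiftFamily] at hlead
    exact (controls_shiftFamily.1 (controls_lead e he F hF _ _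
      (norm_le_one_of_mem_shiftFamily vdc_le_one) hlead)).mono vdc_le_one (N₂_le e)

lemma descend_lex {D : ℕ} (n : ℕ) {v : Fin (D + 1) → ℕ} {e : Fin (D + 1)} (he : v e ≠ 0) :
    Pi.Lex (· > ·) (fun {_} => (· < ·)) (descend n v e) v := by
  refine ⟨e, fun j hj => ?_, ?_⟩
  · rw [descend, if_neg (not_lt.2 (le_of_lt hj)), if_neg (ne_of_gt hj)]
  · rw [descend, if_neg (lt_irrefl e), if_pos rfl]
    lia

lemma uniformlyControlled_isLeadingSystem {D : ℕ} (hD : 2 ≤ D)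
    (hdiff : ∀ n, UniformlyControlled.{u} (D - 1) fun _ _ => IsDifferenceSystem n (D - 1))
    (v : Fin (D + 1) → ℕ) (n : ℕ) : UniformlyControlled.{u} D fun _ _ => IsLeadingSystem n D v := by
  have wf : WellFounded
      (Pi.Lex (fun a b : Fin (D + 1) => a > b) (fun {_} (a b : ℕ) => a < b)) :=
    Pi.Lex.wellFounded (α := fun _ : Fin (D + 1) => ℕ) _ fun _ => Nat.lt_wfRel.wf
  induction v using wf.induction generalizing n with
  | _ v ih =>
    exact uniformlyControlled_isLeadingSystem_of_descend hD (hdiff _) fun e he =>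
      ih _ (descend_lex n he) _

lemma IsDifferenceSystem.isLeadingSystem_map_sub {F : Type*} [Field F] {n D : ℕ} {T b : F[X]}
    {L : List F[X]} (hL : IsDifferenceSystem n D T L)
    (hbT : (T - b).natDegree = D) :
    IsLeadingSystem n D (fun _ => n + 1) (T - b) (L.map (· - b)) where
  length_le := by rw [List.length_map]; exact hL.length_le
  natDegree_sub_ne_zero := by
    simpa only [List.forall_mem_map, sub_sub_sub_cancel_right] using hL.natDegree_sub_ne_zero
  natDegree_eq := hbT
  natDegree_le := List.forall_mem_map.2 fun Q hQ => by
    rw [← sub_sub_sub_cancel_left _ _ T]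
    exact (Polynomial.natDegree_sub_le _ _).trans (max_le hbT.le (hL.natDegree_sub_le Q hQ))
  card_leadingCoeffs_le := fun j => by
    refine (card_leadingCoeffs_le_length _ _).trans ?_
    rw [List.length_cons, List.length_map]
    exact Nat.succ_le_succ hL.length_le

theorem uniformlyControlled_isDifferenceSystem (n D : ℕ) :
    UniformlyControlled.{u} D fun _ _ => IsDifferenceSystem n D := by
  induction D generalizing n with
  | zero => exact uniformlyControlled_isDifferenceSystem_of_le_one n zero_le_one
  | succ D ih =>
    rcases Nat.eq_zero_or_pos D with rfl | hD
    · exact uniformlyControlled_isDifferenceSystem_of_le_one n le_rfl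
    obtain ⟨N₁, controls_lower⟩ := ih n
    obtain ⟨N₂, controls_top⟩ := uniformlyControlled_isLeadingSystem.{u} (D := D + 1) (by lia)
      ih (fun _ => n + 1) n
    refine ⟨max N₁ N₂, fun F _ _ hF T M hM hT => ?_⟩
    by_cases hlower : ∀ Q ∈ M.map Prod.fst, (T - Q).natDegree ≤ D
    · exact (controls_lower F (by lia) T M hM ⟨hT.length_le, hT.natDegree_sub_ne_zero, hlower⟩).mono
        hM (le_max_left _ _)
    push Not at hlower
    obtain ⟨b, hb, hbT⟩ := hlower
    have hlead := hT.isLeadingSystem_map_sub (le_antisymm (hT.natDegree_sub_le b hb) hbT)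
    rw [← map_fst_shiftFamily] at hlead
    exact (controls_shiftFamily.1 (controls_top F hF _ _ (norm_le_one_of_mem_shiftFamily hM)
      hlead)).mono hM (le_max_right _ _)

end UniformControl

section WeylSums

variable {F : Type*} [Field F]

lemma natDegree_taylor_sub_self {R : F[X]} {d : ℕ} (hR : R.natDegree = d + 1)
    (hF : d + 1 < ringChar F) {h : F} (hh : h ≠ 0) : (taylor h R - R).natDegree = d := by
  have cast_ne_zero : (d + 1 : F) ≠ 0 := by
    exact_mod_cast natCast_ne_zero_of_lt_ringChar d.succ_ne_zero hF
  have lead_ne_zero : R.coeff (d + 1) ≠ 0 := by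
    rw [← hR]
    exact leadingCoeff_ne_zero.2 (ne_zero_of_natDegree_gt (n := 0) (by lia))
  refine natDegree_eq_of_le_of_coeff_ne_zero (natDegree_le_pred (n := d + 1) ?_ ?_) ?_
  · exact (natDegree_sub_le _ _).trans (by rw [natDegree_taylor, hR, max_self])
  · rw [coeff_sub, coeff_taylor_of_natDegree_le hR.le, sub_self]
  · rw [coeff_sub, coeff_taylor_of_natDegree_le_succ hR.le, add_sub_cancel_left]
    exact mul_ne_zero (mul_ne_zero cast_ne_zero lead_ne_zero) hh

variable [Fintype F]

lemma expect_addChar_eval_eq_zero {ψ : AddChar F ℂ} (hψ : ψ ≠ 1) {R : F[X]}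
    (hR : R.natDegree = 1) : 𝔼 y, ψ (R.eval y) = 0 := by
  have lead_ne_zero : R.coeff 1 ≠ 0 := by
    rw [← hR]
    exact leadingCoeff_ne_zero.2 (ne_zero_of_natDegree_gt (n := 0) (by lia))
  have shift_ne_one : ψ.mulShift (R.coeff 1) ≠ 1 :=
    AddChar.IsPrimitive.of_ne_one hψ lead_ne_zero
  have eval_eq : ∀ y, ψ (R.eval y) = ψ (R.eval 0) * ψ.mulShift (R.coeff 1) y := fun y => by
    rw [← zero_add y, eval_add_of_natDegree_le_one hR.le, AddChar.map_add_eq_mul,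
      AddChar.mulShift_apply, zero_add]
  rw [Finset.expect_congr rfl fun y _ => eval_eq y, ← Finset.mul_expect,
    Fintype.expect_eq_sum_div_card,
    AddChar.sum_eq_zero_of_ne_one shift_ne_one, zero_div, mul_zero]

lemma norm_expect_addChar_eval_sq_le (ψ : AddChar F ℂ) (R : F[X]) :
    ‖𝔼 y, ψ (R.eval y)‖ ^ 2 ≤ 𝔼 h, ‖𝔼 y, ψ ((taylor h R - R).eval y)‖ := by
  have vdc := norm_expect_mul_sq_le_expect_shift (X := Unit) (B := fun _ => 1)
    (fun _ => norm_one.le) fun _ y => ψ (R.eval y)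
  simp only [one_mul, Fintype.expect_const, addChar_apply_mul_conj] at vdc
  simpa only [eval_sub, taylor_eval] using vdc

theorem norm_expect_addChar_eval_pow_le {ψ : AddChar F ℂ} (hψ : ψ ≠ 1) {R : F[X]} {d : ℕ}
    (hR : R.natDegree = d + 1) (hF : d + 1 < ringChar F) :
    ‖𝔼 y, ψ (R.eval y)‖ ^ 2 ^ d ≤ d / Fintype.card F := by
  classical
  induction d generalizing R with
  | zero => simp [expect_addChar_eval_eq_zero hψ hR]
  | succ d ih =>
    have ih_derivative : ∀ h, ‖𝔼 y, ψ ((taylor h R - R).eval y)‖ ^ 2 ^ d ≤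
        d / Fintype.card F + if h = 0 then 1 else 0 := fun h => by
      split_ifs with hh
      · exact (pow_le_one₀ (norm_nonneg _) (norm_expect_le_one fun y =>
          (AddChar.norm_apply _ _).le)).trans (le_add_of_nonneg_left (by positivity))
      · rw [add_zero]
        exact ih (natDegree_taylor_sub_self hR hF hh) (by lia)
    calc ‖𝔼 y, ψ (R.eval y)‖ ^ 2 ^ (d + 1) = (‖𝔼 y, ψ (R.eval y)‖ ^ 2) ^ 2 ^ d := by
          rw [← pow_mul, pow_succ, mul_comm]
      _ ≤ (𝔼 h, ‖𝔼 y, ψ ((taylor h R - R).eval y)‖) ^ 2 ^ d :=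
          pow_le_pow_left₀ (sq_nonneg _) (norm_expect_addChar_eval_sq_le ψ R) _
      _ ≤ 𝔼 h, ‖𝔼 y, ψ ((taylor h R - R).eval y)‖ ^ 2 ^ d :=
          expect_pow_le (fun _ => norm_nonneg _) _
      _ ≤ 𝔼 h : F, ((d : ℝ) / Fintype.card F + if h = 0 then 1 else 0) :=
          Finset.expect_le_expect fun h _ => ih_derivative h
      _ = (d + 1 : ℕ) / Fintype.card F := by
          rw [Finset.expect_add_distrib, Fintype.expect_const, Fintype.expect_eq_sum_div_card,
            Finset.sum_ite_eq' Finset.univ 0 fun _ => (1 : ℝ), if_pos (Finset.mem_univ _)]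
          push_cast
          ring

end WeylSums

section WeightedAverages

variable {F : Type*} [Field F] {k : ℕ}

/-- The summand of `dualFunction`. -/
noncomputable def dualKernel (w : F → ℂ) (P : Fin (k + 1) → F[X]) (f₀ : F → ℂ)
    (f : Fin k → F → ℂ) (x y : F) : ℂ :=
  w y * (f₀ (x - (P (Fin.last k)).eval y) *
    ∏ i, f i (x - (P (Fin.last k)).eval y + (Fin.init P i).eval y))

lemma norm_dualKernel_le_one {w f₀ : F → ℂ} {f : Fin k → F → ℂ} (hw : ∀ y, ‖w y‖ ≤ 1)
    (hf₀ : ∀ x, ‖f₀ x‖ ≤ 1) (hf : ∀ i x, ‖f i x‖ ≤ 1) (P : Fin (k + 1) → F[X]) (x y : F) :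
    ‖dualKernel w P f₀ f x y‖ ≤ 1 :=
  norm_mul_le_one (hw y) (norm_mul_le_one (hf₀ _) (norm_prod_le_one fun i => hf i _))

lemma dualKernel_mul_conj (w w' : F → ℂ) (P : Fin (k + 1) → F[X]) (f₀ g₀ : F → ℂ)
    (f g : Fin k → F → ℂ) (x y : F) :
    dualKernel w P f₀ f x y * conj (dualKernel w' P g₀ g x y) =
      dualKernel (fun y => w y * conj (w' y)) P (fun x => f₀ x * conj (g₀ x))
        (fun i x => f i x * conj (g i x)) x y := by
  simp only [dualKernel, map_mul, map_prod, Finset.prod_mul_distrib]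
  ring

lemma dualKernel_add_left (w : F → ℂ) (P : Fin (k + 1) → F[X]) (f₀ : F → ℂ) (f : Fin k → F → ℂ)
    (x y s : F) : dualKernel w P f₀ f (x + s) y =
      dualKernel w P (fun x => f₀ (x + s)) (fun i x => f i (x + s)) x y := by
  simp only [dualKernel, add_sub_right_comm, add_right_comm _ s]

/-- The kernels with weight `1`, on which degree lowering operates. -/
def dualFamily (P : Fin (k + 1) → F[X]) : Set (F × F → ℂ) :=
  {U | ∃ g₀ g, (∀ x, ‖g₀ x‖ ≤ 1) ∧ (∀ i x, ‖g i x‖ ≤ 1) ∧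
    U = fun t => dualKernel 1 P g₀ g t.1 t.2}

lemma dualKernel_mul_conj_mem_dualFamily {w f₀ : F → ℂ} {f : Fin k → F → ℂ} (hw : ∀ y, ‖w y‖ = 1)
    (hf₀ : ∀ x, ‖f₀ x‖ ≤ 1) (hf : ∀ i x, ‖f i x‖ ≤ 1) (P : Fin (k + 1) → F[X]) (s s' : F) :
    (fun t : F × F => dualKernel w P f₀ f (t.1 + s) t.2 * conj (dualKernel w P f₀ f (t.1 + s') t.2))
      ∈ dualFamily P := by
  have weight_eq_one : (fun y => w y * conj (w y)) = 1 := funext fun y => by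
    rw [Complex.mul_conj', hw, Pi.one_apply, Complex.ofReal_one, one_pow]
  refine ⟨_, _, fun x => norm_mul_conj_le_one (hf₀ (x + s)) (hf₀ (x + s')),
    fun i x => norm_mul_conj_le_one (hf i (x + s)) (hf i (x + s')), funext fun t => ?_⟩
  rw [dualKernel_add_left, dualKernel_add_left, dualKernel_mul_conj, weight_eq_one]

variable [Fintype F]

/-- The average over `x` and `y` of `w(y) f₀(x) ∏ f_i(x + P_i(y))`. -/
noncomputable def weightedAverage (w : F → ℂ) (P : Fin k → F[X]) (f₀ : F → ℂ)
    (f : Fin k → F → ℂ) : ℂ :=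
  𝔼 x, 𝔼 y, w y * (f₀ x * ∏ i, f i (x + (P i).eval y))

lemma norm_weightedAverage_mem_unitInterval (P : Fin k → F[X]) {w f₀ : F → ℂ}
    {f : Fin k → F → ℂ} (hw : ∀ y, ‖w y‖ ≤ 1) (hf₀ : ∀ x, ‖f₀ x‖ ≤ 1) (hf : ∀ i x, ‖f i x‖ ≤ 1) :
    ‖weightedAverage w P f₀ f‖ ∈ unitInterval :=
  ⟨norm_nonneg _, norm_expect_le_one fun _ => norm_expect_le_one fun y =>
    norm_mul_le_one (hw y) (norm_mul_le_one (hf₀ _) (norm_prod_le_one fun i => hf i _))⟩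

lemma expect_expect_add_left (S : F → F → ℂ) (t : F → F) :
    𝔼 x, 𝔼 y, S (x + t y) y = 𝔼 x, 𝔼 y, S x y := by
  rw [Finset.expect_comm, Finset.expect_comm (f := S)]
  exact Finset.expect_congr rfl fun y _ => expect_add_right (S · y) (t y)

/-- The function whose pairing with `u` is the weighted average with `u` as its last function. -/
noncomputable def dualFunction (w : F → ℂ) (P : Fin (k + 1) → F[X]) (f₀ : F → ℂ)
    (f : Fin k → F → ℂ) (x : F) : ℂ :=
  𝔼 y, dualKernel w P f₀ f x y

lemma expect_mul_dualKernel (w : F → ℂ) (P : Fin (k + 1) → F[X]) (f₀ : F → ℂ)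
    (f : Fin k → F → ℂ) (u : F → ℂ) :
    𝔼 x, 𝔼 y, u x * dualKernel w P f₀ f x y =
      weightedAverage w P f₀ (Fin.snoc (α := fun _ => F → ℂ) f u) := by
  rw [← expect_expect_add_left _ fun y => (P (Fin.last k)).eval y]
  refine Finset.expect_congr rfl fun x _ => Finset.expect_congr rfl fun y _ => ?_
  simp only [dualKernel, add_sub_cancel_right, Fin.prod_univ_castSucc, Fin.snoc_castSucc,
    Fin.snoc_last, Fin.init]
  ring

lemma expect_mul_dualFunction (w : F → ℂ) (P : Fin (k + 1) → F[X]) (f₀ : F → ℂ)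
    (f : Fin k → F → ℂ) (u : F → ℂ) :
    𝔼 x, u x * dualFunction w P f₀ f x =
      weightedAverage w P f₀ (Fin.snoc (α := fun _ => F → ℂ) f u) := by
  simp only [dualFunction, Finset.mul_expect, expect_mul_dualKernel]

lemma weightedAverage_snoc_addChar (w : F → ℂ) (P : Fin (k + 1) → F[X]) (f₀ : F → ℂ)
    (f : Fin k → F → ℂ) (χ : AddChar F ℂ) :
    weightedAverage w P f₀ (Fin.snoc (α := fun _ => F → ℂ) f χ) =
      weightedAverage (fun y => w y * χ ((P (Fin.last k)).eval y)) (Fin.init P)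
        (fun x => f₀ x * χ x) f := by
  refine Finset.expect_congr rfl fun x _ => Finset.expect_congr rfl fun y _ => ?_
  simp only [Fin.prod_univ_castSucc, Fin.snoc_castSucc, Fin.snoc_last, Fin.init,
    AddChar.map_add_eq_mul]
  ring

lemma norm_weightedAverage_sq_le_expect_dualFunction (w : F → ℂ) (P : Fin (k + 1) → F[X])
    (f₀ : F → ℂ) {f : Fin (k + 1) → F → ℂ} (hf : ∀ i x, ‖f i x‖ ≤ 1) :
    ‖weightedAverage w P f₀ f‖ ^ 2 ≤ 𝔼 x, ‖dualFunction w P f₀ (Fin.init f) x‖ ^ 2 := by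
  rw [← Fin.snoc_init_self f, ← expect_mul_dualFunction, Fin.snoc_init_self]
  refine (norm_expect_pow_le _ 2).trans (Finset.expect_le_expect fun x _ => ?_)
  rw [norm_mul]
  exact pow_le_pow_left₀ (by positivity)
    (mul_le_of_le_one_left (norm_nonneg _) (hf (Fin.last k) x)) 2

/-- A polynomial phase becomes a product of two functions in progression, through
`ψ(R(y)) = ψ(-x) ψ(x + R(y))`. -/
lemma weightedAverage_snoc_eq_progAverage (ψ : AddChar F ℂ) (R : F[X]) (P : Fin (k + 1) → F[X])
    (f₀ : F → ℂ) (f : Fin k → F → ℂ) (u : F → ℂ) :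
    weightedAverage (fun y => ψ (R.eval y)) P f₀ (Fin.snoc (α := fun _ => F → ℂ) f u) =
      progAverage (P (Fin.last k)) u ((0, fun x => f₀ x * ψ (-x)) :: (R, ⇑ψ) ::
        List.ofFn fun i => (Fin.init P i, f i)) := by
  refine Finset.expect_congr rfl fun x _ => Finset.expect_congr rfl fun y _ => ?_
  have phase : ψ (R.eval y) = ψ (-x) * ψ (x + R.eval y) := by
    rw [← AddChar.map_add_eq_mul, neg_add_cancel_left]
  simp only [Fin.prod_univ_castSucc, Fin.snoc_castSucc, Fin.snoc_last, Fin.init, progProd,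
    List.map_cons, List.prod_cons, List.map_ofFn, List.prod_ofFn, Function.comp_apply, eval_zero,
    add_zero, phase]
  ring

lemma norm_weightedAverage_pow_le_gowers {N : ℕ} {ψ : AddChar F ℂ} {R : F[X]}
    {P : Fin (k + 1) → F[X]} {f₀ : F → ℂ} {f : Fin (k + 1) → F → ℂ} (hf₀ : ∀ x, ‖f₀ x‖ ≤ 1)
    (hf : ∀ i x, ‖f i x‖ ≤ 1)
    (h : Controls N (P (Fin.last k)) ((0, fun x => f₀ x * ψ (-x)) :: (R, ⇑ψ) ::
        List.ofFn fun i => (Fin.init P i, Fin.init f i))) :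
    ‖weightedAverage (fun y => ψ (R.eval y)) P f₀ f‖ ^ (2 * 4 ^ N) ≤
      gowers N (dualFunction (fun y => ψ (R.eval y)) P f₀ (Fin.init f)) +
        4 ^ N / Fintype.card F := by
  set g := dualFunction (fun y => ψ (R.eval y)) P f₀ (Fin.init f)
  have norm_g_le_one : ∀ x, ‖g x‖ ≤ 1 := fun x => norm_expect_le_one fun y =>
    norm_dualKernel_le_one (fun _ => (AddChar.norm_apply _ _).le) hf₀ (fun i => hf i.castSucc) P x y
  have pairing : progAverage (P (Fin.last k)) (fun x => conj (g x))
      ((0, fun x => f₀ x * ψ (-x)) :: (R, ⇑ψ) :: List.ofFn fun i => (Fin.init P i, Fin.init f i)) =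
      ((𝔼 x, ‖g x‖ ^ 2 : ℝ) : ℂ) := by
    rw [← weightedAverage_snoc_eq_progAverage, ← expect_mul_dualFunction, Complex.ofReal_expect]
    refine Finset.expect_congr rfl fun x _ => ?_
    rw [Complex.ofReal_pow, ← Complex.conj_mul']
  have control := h (fun x => conj (g x)) fun x => (RCLike.norm_conj _).trans_le (norm_g_le_one x)
  rw [pairing, gowers_conj, Complex.norm_real,
    Real.norm_of_nonneg (Finset.expect_nonneg fun x _ => sq_nonneg _)] at control
  rw [pow_mul]
  exact (pow_le_pow_left₀ (sq_nonneg _)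
    (norm_weightedAverage_sq_le_expect_dualFunction _ P f₀ hf) _).trans control

lemma isPseudorandomFamily_dualFamily {P : Fin (k + 1) → F[X]} {ε : ℝ}
    (h : ∀ χ : AddChar F ℂ, χ ≠ 1 → ∀ g₀ g, (∀ x, ‖g₀ x‖ ≤ 1) → (∀ i x, ‖g i x‖ ≤ 1) →
      ‖weightedAverage (fun y => χ ((P (Fin.last k)).eval y)) (Fin.init P) g₀ g‖ ≤ ε) :
    IsPseudorandomFamily Prod.fst (dualFamily P) ε where
  norm_le_one := by
    rintro _ ⟨g₀, g, hg₀, hg, rfl⟩ t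
    exact norm_dualKernel_le_one (fun _ => norm_one.le) hg₀ hg P _ _
  mul_conj_mem := by
    rintro _ ⟨f₀, f, hf₀, hf, rfl⟩ _ ⟨g₀, g, hg₀, hg, rfl⟩
    refine ⟨_, _, fun x => norm_mul_conj_le_one (hf₀ x) (hg₀ x),
      fun i x => norm_mul_conj_le_one (hf i x) (hg i x), funext fun t => ?_⟩
    simp only [dualKernel_mul_conj, Pi.one_apply, map_one, mul_one]
    rfl
  norm_expect_le := by
    rintro _ ⟨g₀, g, hg₀, hg, rfl⟩ χ hχ
    simp only [expect_prod, mul_comm _ (χ _)]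
    rw [expect_mul_dualKernel, weightedAverage_snoc_addChar]
    simpa only [Pi.one_apply, one_mul] using h χ hχ _ g
      (fun x => norm_mul_le_one (hg₀ x) (AddChar.norm_apply χ x).le) hg

end WeightedAverages

section CharacterReplacement

universe u

lemma exists_weightedAverage_polyLE_gowers (d k : ℕ) :
    ∃ s K, ∀ (F : Type u) [Field F] [Fintype F], d < ringChar F →
      ∀ (ψ : AddChar F ℂ) (R : F[X]) (P : Fin (k + 1) → F[X]),
      IsDifferenceSystem (k + 2) d (P (Fin.last k)) (0 :: R :: List.ofFn (Fin.init P)) →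
      ∀ (f₀ : F → ℂ) (f : Fin (k + 1) → F → ℂ), (∀ x, ‖f₀ x‖ ≤ 1) → (∀ i x, ‖f i x‖ ≤ 1) →
      PolyLE K (Fintype.card F : ℝ)⁻¹ ‖weightedAverage (fun y => ψ (R.eval y)) P f₀ f‖
        (gowers (s + 1) (dualFunction (fun y => ψ (R.eval y)) P f₀ (Fin.init f))) := by
  obtain ⟨N, hN⟩ := uniformlyControlled_isDifferenceSystem.{u} (k + 2) d
  refine ⟨N, 2 * 4 ^ (N + 1), fun F _ _ hF ψ R P hP f₀ f hf₀ hf => ?_⟩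
  have family_le_one : ∀ p ∈ (0, fun x => f₀ x * ψ (-x)) :: (R, ⇑ψ) ::
      List.ofFn fun i => (Fin.init P i, Fin.init f i), ∀ x, ‖p.2 x‖ ≤ 1 := by
    simp only [List.mem_cons, List.mem_ofFn, forall_eq_or_imp, forall_exists_index,
      forall_apply_eq_imp_iff]
    exact ⟨fun x => norm_mul_le_one (hf₀ x) (AddChar.norm_apply ψ _).le,
      fun x => (AddChar.norm_apply ψ x).le, fun i => hf i.castSucc⟩
  have controls := (hN F hF (P (Fin.last k)) _ family_le_one
    (by simpa only [List.map_cons, List.map_ofFn, Function.comp_def] using hP)).mono family_le_one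
    (by omega : N ≤ N + 1)
  have bound := norm_weightedAverage_pow_le_gowers hf₀ hf controls
  refine ⟨Nat.succ_le_of_lt (by positivity), bound.trans ?_⟩
  rw [div_eq_mul_inv, mul_add]
  have one_le_pow : (1 : ℝ) ≤ 4 ^ (N + 1) := one_le_pow₀ (by norm_num)
  push_cast
  gcongr
  · exact le_mul_of_one_le_left (gowers_nonneg _ _) (by linarith)
  · linarith

lemma gowers_dualFunction_mem_unitInterval {F : Type*} [Field F] [Fintype F] {k : ℕ}
    {w f₀ : F → ℂ} {f : Fin k → F → ℂ} (hw : ∀ y, ‖w y‖ ≤ 1) (hf₀ : ∀ x, ‖f₀ x‖ ≤ 1)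
    (hf : ∀ i x, ‖f i x‖ ≤ 1) (P : Fin (k + 1) → F[X]) (r : ℕ) :
    gowers r (dualFunction w P f₀ f) ∈ unitInterval :=
  ⟨gowers_nonneg r _, gowers_le_one r fun x => norm_expect_le_one
    (norm_dualKernel_le_one hw hf₀ hf P x)⟩

lemma exists_gowers_dualFunction_polyLE_gowers_one (s K₀ : ℕ) :
    ∃ K, ∀ {F : Type u} [Field F] [Fintype F] {k : ℕ} {P : Fin (k + 1) → F[X]},
      (∀ χ : AddChar F ℂ, χ ≠ 1 → ∀ g₀ g, (∀ x, ‖g₀ x‖ ≤ 1) → (∀ i x, ‖g i x‖ ≤ 1) →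
        PolyLE K₀ (Fintype.card F : ℝ)⁻¹
          ‖weightedAverage (fun y => χ ((P (Fin.last k)).eval y)) (Fin.init P) g₀ g‖ 0) →
      ∀ {w f₀ : F → ℂ} {f : Fin k → F → ℂ}, (∀ y, ‖w y‖ = 1) → (∀ x, ‖f₀ x‖ ≤ 1) →
      (∀ i x, ‖f i x‖ ≤ 1) →
      PolyLE K (Fintype.card F : ℝ)⁻¹ (gowers (s + 1) (dualFunction w P f₀ f))
        (gowers 1 (dualFunction w P f₀ f)) := by
  obtain ⟨K, hK⟩ := exists_gowers_succ_polyLE_gowers_one.{u, u} s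
  refine ⟨(3 * K) ^ K₀ * (2 * K₀ + 1), fun {F _ _ k P} hP w f₀ f hw hf₀ hf => ?_⟩
  have hδ := inv_card_mem_unitInterval F
  obtain ⟨χ₀, hχ₀⟩ : ∃ χ : AddChar F ℂ, χ ≠ 1 :=
    (AddChar.exists_apply_ne_zero.2 (one_ne_zero (α := F))).imp fun χ => mt (DFunLike.congr_fun · 1)
  obtain ⟨ε, ⟨hε, hεδ⟩, ε_max⟩ := exists_isGreatest_polyLE_zero
    (hP χ₀ hχ₀ 0 0 (by simp) (by simp)).1 hδ.1
  have pseudorandom : IsPseudorandomFamily Prod.fst (dualFamily P) ε :=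
    isPseudorandomFamily_dualFamily fun χ hχ g₀ g hg₀ hg =>
      ε_max ⟨norm_weightedAverage_mem_unitInterval _ (fun y => (AddChar.norm_apply χ _).le) hg₀ hg,
        hP χ hχ g₀ g hg₀ hg⟩
  have gowers_mem := gowers_dualFunction_mem_unitInterval (fun y => (hw y).le) hf₀ hf P
  exact (hK pseudorandom hε (norm_dualKernel_le_one (fun y => (hw y).le) hf₀ hf P)
    (dualKernel_mul_conj_mem_dualFamily hw hf₀ hf P)).trans_error hεδ (gowers_mem _) (gowers_mem 1)
    hε.1 hδ

lemma exists_gowers_one_dualFunction_le {F : Type*} [Field F] [Fintype F] {k : ℕ}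
    {w f₀ : F → ℂ} {f : Fin k → F → ℂ} (hw : ∀ y, ‖w y‖ ≤ 1) (hf₀ : ∀ x, ‖f₀ x‖ ≤ 1)
    (hf : ∀ i x, ‖f i x‖ ≤ 1) (P : Fin (k + 1) → F[X]) :
    ∃ χ : AddChar F ℂ, gowers 1 (dualFunction w P f₀ f) ≤
      ‖weightedAverage (fun y => w y * χ ((P (Fin.last k)).eval y)) (Fin.init P)
        (fun x => f₀ x * χ x) f‖ := by
  obtain ⟨χ, hχ⟩ := exists_gowers_one_le (dualFunction w P f₀ f) fun x => norm_expect_le_one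
    (norm_dualKernel_le_one hw hf₀ hf P x)
  refine ⟨χ, hχ.trans ?_⟩
  simp only [mul_comm (dualFunction w P f₀ f _)]
  rw [expect_mul_dualFunction, weightedAverage_snoc_addChar]
  have average_mem := norm_weightedAverage_mem_unitInterval (Fin.init P)
    (fun y => norm_mul_le_one (hw y) (AddChar.norm_apply χ ((P (Fin.last k)).eval y)).le)
    (fun x => norm_mul_le_one (hf₀ x) (AddChar.norm_apply χ x).le) hf
  exact pow_le_of_le_one average_mem.1 average_mem.2 two_ne_zero

/-- The last function of a weighted average may be replaced by an additive character, which is then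
absorbed into the weight and into `f₀`. -/
theorem exists_polyLE_weightedAverage_init (d k K₀ : ℕ) :
    ∃ K, ∀ {F : Type u} [Field F] [Fintype F], d < ringChar F →
      ∀ {ψ : AddChar F ℂ} {R : F[X]} {P : Fin (k + 1) → F[X]},
      IsDifferenceSystem (k + 2) d (P (Fin.last k)) (0 :: R :: List.ofFn (Fin.init P)) →
      (∀ χ : AddChar F ℂ, χ ≠ 1 → ∀ g₀ g, (∀ x, ‖g₀ x‖ ≤ 1) → (∀ i x, ‖g i x‖ ≤ 1) →
        PolyLE K₀ (Fintype.card F : ℝ)⁻¹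
          ‖weightedAverage (fun y => χ ((P (Fin.last k)).eval y)) (Fin.init P) g₀ g‖ 0) →
      ∀ {f₀ : F → ℂ} {f : Fin (k + 1) → F → ℂ}, (∀ x, ‖f₀ x‖ ≤ 1) → (∀ i x, ‖f i x‖ ≤ 1) →
      ∃ χ : AddChar F ℂ,
        PolyLE K (Fintype.card F : ℝ)⁻¹ ‖weightedAverage (fun y => ψ (R.eval y)) P f₀ f‖
          ‖weightedAverage (fun y => ψ (R.eval y) * χ ((P (Fin.last k)).eval y)) (Fin.init P)
            (fun x => f₀ x * χ x) (Fin.init f)‖ := by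
  obtain ⟨s, K₁, controlled⟩ := exists_weightedAverage_polyLE_gowers.{u} d k
  obtain ⟨K₂, lowered⟩ := exists_gowers_dualFunction_polyLE_gowers_one.{u} s K₀
  refine ⟨(3 * K₁) ^ K₂ * (2 * K₂ + 1), fun {F _ _} hF ψ R P hP hK₀ f₀ f hf₀ hf => ?_⟩
  have norm_phase : ∀ y, ‖ψ (R.eval y)‖ = 1 := fun y => AddChar.norm_apply ψ _
  have hf_init : ∀ i x, ‖Fin.init f i x‖ ≤ 1 := fun i => hf i.castSucc
  have gowers_mem := gowers_dualFunction_mem_unitInterval (fun y => (norm_phase y).le) hf₀ hf_init P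
  obtain ⟨χ, hχ⟩ := exists_gowers_one_dualFunction_le (fun y => (norm_phase y).le) hf₀ hf_init P
  exact ⟨χ, ((controlled F hF ψ R P hP f₀ f hf₀ hf).trans (lowered hK₀ norm_phase hf₀ hf_init)
    (norm_weightedAverage_mem_unitInterval P (fun y => (norm_phase y).le) hf₀ hf)
    (gowers_mem _).1 (inv_card_mem_unitInterval F) (gowers_mem 1).1).mono_right hχ⟩

end CharacterReplacement

section IndependentSystems

variable {F : Type*} [Field F] {ι κ : Type*} {d : ℕ}

/-- Linearly independent polynomials of degree at most `d` with zero constant term. -/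
structure IsIndependentSystem (d : ℕ) (P : ι → F[X]) : Prop where
  linearIndependent : LinearIndependent F P
  coeff_zero : ∀ i, (P i).coeff 0 = 0
  natDegree_le : ∀ i, (P i).natDegree ≤ d

variable {P : ι → F[X]}

lemma natDegree_ne_zero_of_coeff_zero {p : F[X]} (hp : p ≠ 0) (h0 : p.coeff 0 = 0) :
    p.natDegree ≠ 0 := fun h => hp (by rw [eq_C_of_natDegree_eq_zero h, h0, map_zero])

lemma IsIndependentSystem.natDegree_ne_zero (hP : IsIndependentSystem d P) (i : ι) :
    (P i).natDegree ≠ 0 :=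
  natDegree_ne_zero_of_coeff_zero (hP.linearIndependent.ne_zero i) (hP.coeff_zero i)

lemma IsIndependentSystem.natDegree_sub_ne_zero (hP : IsIndependentSystem d P) {i j : ι}
    (hij : i ≠ j) : (P i - P j).natDegree ≠ 0 :=
  natDegree_ne_zero_of_coeff_zero (sub_ne_zero.2 (hP.linearIndependent.injective.ne hij))
    (by rw [coeff_sub, hP.coeff_zero, hP.coeff_zero, sub_zero])

lemma IsIndependentSystem.comp (hP : IsIndependentSystem d P) {σ : κ → ι}
    (hσ : Function.Injective σ) : IsIndependentSystem d (P ∘ σ) where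
  linearIndependent := hP.linearIndependent.comp σ hσ
  coeff_zero j := hP.coeff_zero (σ j)
  natDegree_le j := hP.natDegree_le (σ j)

lemma IsIndependentSystem.add_smul (hP : IsIndependentSystem d P) {c : ι → F} {i : ι}
    (hc : c i = 0) : IsIndependentSystem d (P + (c · • P i)) where
  linearIndependent := (linearIndependent_add_smul_iff hc).2 hP.linearIndependent
  coeff_zero j := by simp [hP.coeff_zero]
  natDegree_le j := natDegree_add_le_of_degree_le (hP.natDegree_le j)
    ((natDegree_smul_le _ _).trans (hP.natDegree_le i))

variable {k : ℕ}

lemma IsIndependentSystem.init {P : Fin (k + 1) → F[X]} (hP : IsIndependentSystem d P) :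
    IsIndependentSystem d (Fin.init P) :=
  hP.comp (Fin.castSucc_injective k)

lemma IsIndependentSystem.succ_sub_zero {P : Fin (k + 1) → F[X]} (hP : IsIndependentSystem d P) :
    IsIndependentSystem d fun i : Fin k => P i.succ - P 0 := by
  convert (hP.add_smul (c := fun i => if i = 0 then 0 else -1) (if_pos rfl)).comp
    (Fin.succ_injective k) using 2 with i
  simp [sub_eq_add_neg]

lemma IsIndependentSystem.snoc_add_smul {P : Fin (k + 2) → F[X]} (hP : IsIndependentSystem d P)
    (φ : F) : IsIndependentSystem d (Fin.snoc (α := fun _ => F[X]) (Fin.init (Fin.init P))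
      (P (Fin.last (k + 1)) + φ • Fin.init P (Fin.last k))) := by
  convert (hP.add_smul (c := Pi.single (Fin.last (k + 1)) φ) (i := (Fin.last k).castSucc)
    (Pi.single_eq_of_ne (Fin.castSucc_lt_last _).ne φ)).comp
    (Fin.succAbove_right_injective (p := (Fin.last k).castSucc)) using 1
  funext i
  refine Fin.lastCases ?_ (fun i => ?_) i
  · simp [Fin.init]
  · simp [Fin.init, Fin.succAbove_castSucc_of_lt _ _ (Fin.castSucc_lt_last i)]

lemma IsIndependentSystem.isDifferenceSystem {P : Fin (k + 1) → F[X]}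
    (hP : IsIndependentSystem d P) {R : F[X]} (hR : R.natDegree ≤ d)
    (hPR : (P (Fin.last k) - R).natDegree ≠ 0) :
    IsDifferenceSystem (k + 2) d (P (Fin.last k)) (0 :: R :: List.ofFn (Fin.init P)) where
  length_le := by simp
  natDegree_sub_ne_zero := by
    simp only [List.forall_mem_cons, List.forall_mem_ofFn_iff, sub_zero]
    exact ⟨hP.natDegree_ne_zero _, hPR,
      fun i => hP.natDegree_sub_ne_zero (Fin.castSucc_lt_last i).ne'⟩
  natDegree_sub_le Q hQ := by
    refine (Polynomial.natDegree_sub_le _ _).trans (max_le (hP.natDegree_le _) ?_)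
    revert Q
    simp only [List.forall_mem_cons, List.forall_mem_ofFn_iff]
    exact ⟨natDegree_zero.trans_le d.zero_le, hR, fun i => hP.natDegree_le _⟩

end IndependentSystems

lemma exists_mulShift_eq {F : Type*} [Field F] [Finite F] {ψ : AddChar F ℂ} (hψ : ψ ≠ 1)
    (χ : AddChar F ℂ) : ∃ φ, ψ.mulShift φ = χ := by
  cases nonempty_fintype F
  exact ((Fintype.bijective_iff_injective_and_card _).2
    ⟨AddChar.to_mulShift_inj_of_isPrimitive (AddChar.IsPrimitive.of_ne_one hψ),
      AddChar.card_eq.symm⟩).2 χ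

section Reduction

variable {R S K ι : Type*} [CommRing R] [CommRing S] [Field K] [Fintype ι] {n : ℕ}

/-- The matrix whose rows are the first `n` coefficients of the given polynomials. -/
def coeffMatrix (n : ℕ) (P : ι → R[X]) : Matrix ι (Fin n) R :=
  Matrix.of fun i j => (P i).coeff j

/-- The determinant of the Gram matrix of the coefficient vectors. It is compatible with ring
homomorphisms, and thereby transports linear independence from `ℚ` to almost all characteristics. -/
noncomputable def gramDet [DecidableEq ι] (n : ℕ) (P : ι → R[X]) : R :=
  (coeffMatrix n P * (coeffMatrix n P).transpose).det

lemma gramDet_map [DecidableEq ι] (f : R →+* S) (P : ι → R[X]) :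
    gramDet n (fun i => (P i).map f) = f (gramDet n P) := by
  have coeffMatrix_map : coeffMatrix n (fun i => (P i).map f) = (coeffMatrix n P).map f := by
    ext i j
    simp [coeffMatrix]
  rw [gramDet, gramDet, coeffMatrix_map, f.map_det, RingHom.mapMatrix_apply, Matrix.map_mul,
    Matrix.transpose_map]

open Matrix in
lemma vecMul_coeffMatrix (c : ι → R) (P : ι → R[X]) :
    c ᵥ* coeffMatrix n P = fun j : Fin n => (∑ i, c i • P i).coeff j := by
  ext j
  simp [coeffMatrix, vecMul, dotProduct]

lemma linearIndependent_of_gramDet_ne_zero [DecidableEq ι] {P : ι → K[X]}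
    (h : gramDet n P ≠ 0) : LinearIndependent K P := by
  refine Fintype.linearIndependent_iff.2 fun c hc => congrFun
    (Matrix.eq_zero_of_vecMul_eq_zero h ?_)
  rw [← Matrix.vecMul_vecMul, vecMul_coeffMatrix, hc]
  exact Matrix.zero_vecMul _

lemma gramDet_ne_zero [DecidableEq ι] [LinearOrder K] [IsStrictOrderedRing K] {P : ι → K[X]}
    (hP : LinearIndependent K P) (hn : ∀ i, (P i).natDegree < n) : gramDet n P ≠ 0 := by
  intro h
  obtain ⟨c, c_ne_zero, hc⟩ := Matrix.exists_vecMul_eq_zero_iff.2 h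
  have self_dotProduct : dotProduct (Matrix.vecMul c (coeffMatrix n P))
      (Matrix.vecMul c (coeffMatrix n P)) = 0 := by
    nth_rewrite 2 [← Matrix.mulVec_transpose]
    rw [Matrix.dotProduct_mulVec, Matrix.vecMul_vecMul, hc, zero_dotProduct]
  rw [dotProduct_self_eq_zero, vecMul_coeffMatrix] at self_dotProduct
  refine c_ne_zero (funext (Fintype.linearIndependent_iff.1 hP c ?_))
  ext j
  rcases lt_or_ge j n with hj | hj
  · exact congrFun self_dotProduct ⟨j, hj⟩
  · simp [coeff_eq_zero_of_natDegree_lt ((hn _).trans_le hj)]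

end Reduction

section IndependentAverages

universe u

lemma weightedAverage_fin_zero {F : Type*} [Field F] [Fintype F] (w : F → ℂ) (P : Fin 0 → F[X])
    (f₀ : F → ℂ) (f : Fin 0 → F → ℂ) :
    weightedAverage w P f₀ f = (𝔼 x, f₀ x) * 𝔼 y, w y := by
  rw [Finset.expect_mul_expect]
  simp only [weightedAverage, Fin.prod_univ_zero, mul_one, mul_comm (w _)]

lemma norm_expect_addChar_eval_polyLE_zero {F : Type*} [Field F] [Fintype F] {ψ : AddChar F ℂ}
    (hψ : ψ ≠ 1) {d : ℕ} (hF : d < ringChar F) {R : F[X]} (hR : R.natDegree ≠ 0)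
    (hRd : R.natDegree ≤ d) :
    PolyLE (2 ^ d) (Fintype.card F : ℝ)⁻¹ ‖𝔼 y, ψ (R.eval y)‖ 0 := by
  obtain ⟨e, he⟩ := Nat.exists_eq_succ_of_ne_zero hR
  have bound := norm_expect_addChar_eval_pow_le hψ he (by omega)
  refine .of_pow_le (n := 2 ^ e) (C := e)
    ⟨norm_nonneg _, norm_expect_le_one fun y => (AddChar.norm_apply ψ _).le⟩ (by positivity)
    (by rwa [zero_add, ← div_eq_mul_inv]) (Nat.pow_le_pow_right two_pos (by omega)) ?_
    Nat.one_le_two_pow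
  exact_mod_cast (by omega : e ≤ d).trans d.lt_two_pow_self.le

theorem exists_weightedAverage_addChar_polyLE_zero (d k : ℕ) :
    ∃ K, ∀ {F : Type u} [Field F] [Fintype F], d < ringChar F →
      ∀ {P : Fin (k + 1) → F[X]}, IsIndependentSystem d P → ∀ {ψ : AddChar F ℂ}, ψ ≠ 1 →
      ∀ {f₀ : F → ℂ} {f : Fin k → F → ℂ}, (∀ x, ‖f₀ x‖ ≤ 1) → (∀ i x, ‖f i x‖ ≤ 1) →
      PolyLE K (Fintype.card F : ℝ)⁻¹
        ‖weightedAverage (fun y => ψ ((P (Fin.last k)).eval y)) (Fin.init P) f₀ f‖ 0 := by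
  induction k with
  | zero =>
    refine ⟨2 ^ d, fun {F _ _} hF P hP ψ hψ f₀ f hf₀ _ => ?_⟩
    refine (norm_expect_addChar_eval_polyLE_zero hψ hF (hP.natDegree_ne_zero _)
      (hP.natDegree_le (Fin.last 0))).mono_left (norm_nonneg _) ?_
    rw [weightedAverage_fin_zero, norm_mul]
    exact mul_le_of_le_one_left (norm_nonneg _) (norm_expect_le_one hf₀)
  | succ k ih =>
    obtain ⟨K₀, hK₀⟩ := ih
    obtain ⟨K, hK⟩ := exists_polyLE_weightedAverage_init.{u} d k K₀
    refine ⟨(3 * K) ^ K₀ * (2 * K₀ + 1), fun {F _ _} hF P hP ψ hψ f₀ f hf₀ hf => ?_⟩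
    obtain ⟨χ, hχ⟩ := hK hF (ψ := ψ) (hP.init.isDifferenceSystem
      (hP.natDegree_le (Fin.last (k + 1)))
      (hP.natDegree_sub_ne_zero (Fin.castSucc_lt_last _).ne))
      (fun χ hχ g₀ g hg₀ hg => hK₀ hF hP.init hχ hg₀ hg) hf₀ hf
    obtain ⟨φ, rfl⟩ := exists_mulShift_eq hψ χ
    have phase_eq : ∀ y, ψ ((P (Fin.last (k + 1))).eval y) *
        ψ.mulShift φ ((Fin.init P (Fin.last k)).eval y) =
        ψ ((P (Fin.last (k + 1)) + φ • Fin.init P (Fin.last k)).eval y) := fun y => by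
      rw [AddChar.mulShift_apply, ← AddChar.map_add_eq_mul, eval_add, eval_smul, smul_eq_mul]
    have bound := hK₀ hF (hP.snoc_add_smul φ) hψ
      (fun x => norm_mul_le_one (hf₀ x) (AddChar.norm_apply (ψ.mulShift φ) x).le)
      (fun i => hf i.castSucc)
    rw [Fin.snoc_last, Fin.init_snoc] at bound
    simp only [phase_eq] at hχ
    exact hχ.trans bound
      (norm_weightedAverage_mem_unitInterval _ (fun y => (AddChar.norm_apply ψ _).le) hf₀ hf)
      (norm_nonneg _) (inv_card_mem_unitInterval F) le_rfl

theorem exists_weightedAverage_polyLE_expect (d k : ℕ) :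
    ∃ K, ∀ {F : Type u} [Field F] [Fintype F], d < ringChar F →
      ∀ {P : Fin k → F[X]}, IsIndependentSystem d P →
      ∀ {f₀ : F → ℂ} {f : Fin k → F → ℂ}, (∀ x, ‖f₀ x‖ ≤ 1) → (∀ i x, ‖f i x‖ ≤ 1) →
      PolyLE K (Fintype.card F : ℝ)⁻¹ ‖weightedAverage 1 P f₀ f‖ ‖𝔼 x, f₀ x‖ := by
  induction k with
  | zero =>
    refine ⟨1, fun {F _ _} _ P _ f₀ f _ _ => .of_le (by positivity) ?_⟩
    rw [weightedAverage_fin_zero]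
    simp
  | succ k ih =>
    obtain ⟨K₁, hK₁⟩ := ih
    obtain ⟨K₀, hK₀⟩ := exists_weightedAverage_addChar_polyLE_zero.{u} d k
    obtain ⟨K, hK⟩ := exists_polyLE_weightedAverage_init.{u} d k K₀
    refine ⟨(3 * K) ^ (K₀ + K₁) * (2 * (K₀ + K₁) + 1), fun {F _ _} hF P hP f₀ f hf₀ hf => ?_⟩
    obtain ⟨χ, hχ⟩ := hK hF (ψ := 1) (hP.isDifferenceSystem (natDegree_zero.trans_le d.zero_le)
      (by rw [sub_zero]; exact hP.natDegree_ne_zero _))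
      (fun χ hχ g₀ g hg₀ hg => hK₀ hF hP hχ hg₀ hg) hf₀ hf
    simp only [AddChar.one_apply, one_mul] at hχ
    have hf₀χ : ∀ x, ‖f₀ x * χ x‖ ≤ 1 := fun x =>
      norm_mul_le_one (hf₀ x) (AddChar.norm_apply χ x).le
    have init_mem := norm_weightedAverage_mem_unitInterval (Fin.init P)
      (fun y => (AddChar.norm_apply χ ((P (Fin.last k)).eval y)).le) hf₀χ (fun i => hf i.castSucc)
    refine hχ.trans ?_ (norm_weightedAverage_mem_unitInterval _ (fun _ => norm_one.le) hf₀ hf)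
      (norm_nonneg _) (inv_card_mem_unitInterval F) (norm_nonneg _)
    rcases eq_or_ne χ 1 with rfl | χ_ne_one
    · simp only [AddChar.one_apply, mul_one] at init_mem ⊢
      exact (hK₁ hF hP.init hf₀ fun i => hf i.castSucc).mono init_mem (by positivity)
        (Nat.le_add_left _ _)
    · exact ((hK₀ hF hP χ_ne_one hf₀χ fun i => hf i.castSucc).mono_right (norm_nonneg _)).mono
        init_mem (by positivity) (Nat.le_add_right _ _)

end IndependentAverages

section Counting

universe u

lemma weightedAverage_sub {F : Type*} [Field F] [Fintype F] {k : ℕ} (w : F → ℂ)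
    (P : Fin k → F[X]) (f₀ g₀ : F → ℂ) (f : Fin k → F → ℂ) :
    weightedAverage w P (fun x => f₀ x - g₀ x) f =
      weightedAverage w P f₀ f - weightedAverage w P g₀ f := by
  simp only [weightedAverage, sub_mul, mul_sub, Finset.expect_sub_distrib]

lemma weightedAverage_const {F : Type*} [Field F] [Fintype F] {k : ℕ} (P : Fin (k + 1) → F[X])
    (c : ℂ) (f : Fin (k + 1) → F → ℂ) :
    weightedAverage 1 P (fun _ => c) f =
      c * weightedAverage 1 (fun i => P i.succ - P 0) (f 0) (Fin.tail f) := by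
  symm
  rw [weightedAverage, ← expect_expect_add_left _ fun y => (P 0).eval y]
  simp only [weightedAverage, Finset.mul_expect, Fin.prod_univ_succ, Fin.tail, eval_sub, add_assoc,
    add_sub_cancel, Pi.one_apply, one_mul]

lemma mul_norm_weightedAverage_le {F : Type*} [Field F] [Fintype F] {k : ℕ}
    (P : Fin (k + 1) → F[X]) (f₀ : F → ℂ) (f : Fin (k + 1) → F → ℂ) (c : ℂ) :
    ‖c‖ * ‖weightedAverage 1 (fun i => P i.succ - P 0) (f 0) (Fin.tail f)‖ ≤
      ‖weightedAverage 1 P f₀ f‖ + ‖weightedAverage 1 P (fun x => f₀ x - c) f‖ := by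
  rw [← norm_mul, ← weightedAverage_const, weightedAverage_sub]
  exact norm_le_norm_add_norm_sub _ _

theorem exists_expect_polyLE_weightedAverage (d k : ℕ) :
    ∃ K, ∀ {F : Type u} [Field F] [Fintype F], d < ringChar F →
      ∀ {P : Fin k → F[X]}, IsIndependentSystem d P → ∀ {a : F → ℝ}, (∀ x, a x ∈ unitInterval) →
      PolyLE K (Fintype.card F : ℝ)⁻¹ (𝔼 x, a x)
        ‖weightedAverage 1 P (fun x => a x) fun _ x => a x‖ := by
  induction k with
  | zero =>
    refine ⟨1, fun {F _ _} _ P _ a _ => .of_le (by positivity) ?_⟩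
    rw [weightedAverage_fin_zero, ← Complex.ofReal_expect]
    simp only [Pi.one_apply, Fintype.expect_const, mul_one, Complex.norm_real]
    exact le_abs_self _
  | succ k ih =>
    obtain ⟨K₁, hK₁⟩ := ih
    obtain ⟨K₂, hK₂⟩ := exists_weightedAverage_polyLE_expect.{u} d (k + 1)
    refine ⟨(3 * (K₁ + 1)) ^ K₂ * (2 * K₂ + 1), fun {F _ _} hF P hP a ha => ?_⟩
    have hδ := inv_card_mem_unitInterval F
    set α := 𝔼 x, a x with hα
    have α_mem : α ∈ unitInterval := ⟨Finset.expect_nonneg fun x _ => (ha x).1,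
      Finset.expect_le Finset.univ_nonempty fun x _ => (ha x).2⟩
    have norm_a_le_one : ∀ x, ‖(a x : ℂ)‖ ≤ 1 := fun x => by
      rw [Complex.norm_real, Real.norm_of_nonneg (ha x).1]
      exact (ha x).2
    have norm_sub_le_one : ∀ x, ‖(a x : ℂ) - α‖ ≤ 1 := fun x => by
      rw [← Complex.ofReal_sub, Complex.norm_real, Real.norm_eq_abs]
      exact abs_le.2 ⟨by linarith [(ha x).1, α_mem.2], by linarith [(ha x).2, α_mem.1]⟩
    have mean_zero : 𝔼 x, ((a x : ℂ) - α) = 0 := by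
      rw [Finset.expect_sub_distrib, Fintype.expect_const, hα, Complex.ofReal_expect, sub_self]
    have error := hK₂ hF hP norm_sub_le_one fun _ => norm_a_le_one
    rw [mean_zero, norm_zero] at error
    have split := mul_norm_weightedAverage_le P (fun x => (a x : ℂ)) (fun _ x => (a x : ℂ)) α
    rw [Complex.norm_real, Real.norm_of_nonneg α_mem.1] at split
    have shorter := (hK₁ hF hP.succ_sub_zero ha).of_mul_le split α_mem hδ.1
      (add_nonneg (norm_nonneg _) (norm_nonneg _))
    have average_nonneg := norm_nonneg (weightedAverage 1 P (fun x => a x) fun _ x => a x)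
    exact shorter.trans_add ((PolyLE.of_le hδ.1 le_rfl).mono
      (norm_weightedAverage_mem_unitInterval P (fun _ => norm_one.le) norm_a_le_one
        fun _ => norm_a_le_one) (add_nonneg average_nonneg hδ.1) error.1)
      (error.mono_right average_nonneg) α_mem average_nonneg (norm_nonneg _) hδ average_nonneg

end Counting

section ProgressionFree

universe u

lemma norm_weightedAverage_le_inv_card {F : Type*} [Field F] [Fintype F] {k : ℕ} {w f₀ : F → ℂ}
    {P : Fin k → F[X]} {f : Fin k → F → ℂ} (hw : ‖w 0‖ ≤ 1) (hf₀ : ∀ x, ‖f₀ x‖ ≤ 1)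
    (hf : ∀ i x, ‖f i x‖ ≤ 1)
    (h : ∀ x, ∀ y ≠ 0, f₀ x * ∏ i, f i (x + (P i).eval y) = 0) :
    ‖weightedAverage w P f₀ f‖ ≤ (Fintype.card F : ℝ)⁻¹ := by
  have expect_eq : ∀ x, 𝔼 y, w y * (f₀ x * ∏ i, f i (x + (P i).eval y)) =
      w 0 * (f₀ x * ∏ i, f i (x + (P i).eval 0)) * (Fintype.card F : ℂ)⁻¹ := fun x => by
    rw [Fintype.expect_eq_sum_div_card, div_eq_mul_inv, Fintype.sum_eq_single 0 fun y hy => by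
      rw [h x y hy, mul_zero]]
  simp only [weightedAverage, expect_eq, ← Finset.expect_mul]
  rw [norm_mul, norm_inv, Complex.norm_natCast]
  exact mul_le_of_le_one_left (by positivity) (norm_expect_le_one fun x =>
    norm_mul_le_one hw (norm_mul_le_one (hf₀ x) (norm_prod_le_one fun i => hf i _)))

lemma norm_weightedAverage_indicator_le {F : Type*} [Field F] [Fintype F] {k : ℕ}
    {P : Fin k → F[X]} {A : Set F} (hA : ∀ x ∈ A, ∀ y ≠ 0, ∃ i, x + (P i).eval y ∉ A) :
    ‖weightedAverage 1 P (fun x => ((A.indicator 1 x : ℝ) : ℂ))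
      fun _ x => ((A.indicator 1 x : ℝ) : ℂ)‖ ≤ (Fintype.card F : ℝ)⁻¹ := by
  have norm_le_one : ∀ x, ‖((A.indicator 1 x : ℝ) : ℂ)‖ ≤ 1 := fun x => by
    by_cases hx : x ∈ A <;> simp [hx]
  refine norm_weightedAverage_le_inv_card norm_one.le norm_le_one (fun _ => norm_le_one)
    fun x y hy => ?_
  by_cases hx : x ∈ A
  · obtain ⟨i, hi⟩ := hA x hx y hy
    rw [Finset.prod_eq_zero (Finset.mem_univ i) (by simp [hi]), mul_zero]
  · simp [hx]

lemma expect_indicator_one {α : Type*} [Fintype α] (A : Finset α) :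
    𝔼 x, (A : Set α).indicator (1 : α → ℝ) x = A.card / Fintype.card α := by
  classical
  rw [Fintype.expect_eq_sum_div_card, Finset.sum_indicator_eq_sum_inter]
  simp

theorem exists_isIndependentSystem_map_intCast {ι : Type*} [Finite ι] {d : ℕ} {P : ι → ℤ[X]}
    (hP : LinearIndependent ℚ fun i => (P i).map (Int.castRingHom ℚ))
    (hP0 : ∀ i, (P i).coeff 0 = 0) (hPd : ∀ i, (P i).natDegree ≤ d) :
    ∃ c : ℕ, ∀ (F : Type*) [Field F], c < ringChar F →
      IsIndependentSystem d fun i => (P i).map (Int.castRingHom F) := by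
  classical
  cases nonempty_fintype ι
  have gramDet_ne : gramDet (d + 1) P ≠ 0 := fun h => by
    refine gramDet_ne_zero (n := d + 1) hP
      (fun i => Nat.lt_succ_of_le (natDegree_map_le.trans (hPd i))) ?_
    rw [gramDet_map, h, map_zero]
  refine ⟨(gramDet (d + 1) P).natAbs, fun F _ hF => ⟨?_, fun i => ?_, fun i =>
    natDegree_map_le.trans (hPd i)⟩⟩
  · refine linearIndependent_of_gramDet_ne_zero (n := d + 1) ?_
    rw [gramDet_map, eq_intCast, Ne, CharP.intCast_eq_zero_iff F (ringChar F)]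
    exact fun h => hF.not_ge (Nat.le_of_dvd (Int.natAbs_pos.2 gramDet_ne) (Int.natCast_dvd.1 h))
  · rw [coeff_map, hP0, map_zero]

theorem exists_card_polyLE_of_progressionFree (d k : ℕ) :
    ∃ K, ∀ {F : Type u} [Field F] [Fintype F], d < ringChar F → ∀ {P : Fin k → F[X]},
      IsIndependentSystem d P → ∀ {A : Finset F},
      (∀ x ∈ A, ∀ y ≠ 0, ∃ i, x + (P i).eval y ∉ A) →
      PolyLE K (Fintype.card F : ℝ)⁻¹ (A.card / Fintype.card F) (Fintype.card F : ℝ)⁻¹ := by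
  obtain ⟨K, hK⟩ := exists_expect_polyLE_weightedAverage.{u} d k
  refine ⟨K, fun {F _ _} hF P hP A hA => ?_⟩
  have indicator_mem : ∀ x, (A : Set F).indicator (1 : F → ℝ) x ∈ unitInterval := fun x =>
    ⟨Set.indicator_nonneg (fun _ _ => zero_le_one) x,
      Set.indicator_le_self' (fun _ _ => zero_le_one) x⟩
  rw [← expect_indicator_one]
  exact (hK hF hP indicator_mem).mono_right (norm_weightedAverage_indicator_le hA)

end ProgressionFree

end PolynomialProgression

/-- For linearly independent `P₁,…,Pₘ ∈ ℤ[y]` with zero constant term,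
there exist `c, γ, C > 0` such that for every finite field `𝔽_q` of characteristic at
least `c`, every subset of `𝔽_q` with no nontrivial progression
`x, x+P₁(y), …, x+Pₘ(y)` has size at most `C·q^{1−γ}`. -/
theorem statement0 (m : ℕ) (P : Fin m → Polynomial ℤ)
    (hP0 : ∀ i, (P i).coeff 0 = 0)
    (hind : LinearIndependent ℚ fun i => (P i).map (Int.castRingHom ℚ)) :
    ∃ c γ C : ℝ, 0 < c ∧ 0 < γ ∧ 0 < C ∧
      ∀ (F : Type) [Field F] [Fintype F], c ≤ (ringChar F : ℝ) →
        ∀ A : Finset F,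
          (¬ ∃ x y : F, y ≠ 0 ∧ x ∈ A ∧ ∀ i, x + Polynomial.aeval y (P i) ∈ A) →
          (A.card : ℝ) ≤ C * (Fintype.card F : ℝ) ^ ((1 : ℝ) - γ) := by
  let d := Finset.univ.sup fun i => (P i).natDegree
  obtain ⟨c, hc⟩ := PolynomialProgression.exists_isIndependentSystem_map_intCast hind hP0
    fun i => (Finset.le_sup (Finset.mem_univ i) : _ ≤ d)
  obtain ⟨K, hK⟩ := PolynomialProgression.exists_card_polyLE_of_progressionFree d m
  refine ⟨(max c d + 1 : ℕ), ((K + 1 : ℕ) : ℝ)⁻¹, (2 * (K + 1 : ℕ)) ^ ((K + 1 : ℕ) : ℝ)⁻¹,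
    by positivity, by positivity, by positivity, fun F _ _ hF A hA => ?_⟩
  have char_gt : max c d < ringChar F := Nat.cast_le.1 hF
  have progressionFree : ∀ x ∈ A, ∀ y ≠ 0,
      ∃ i, x + ((P i).map (Int.castRingHom F)).eval y ∉ A := fun x hx y hy => by
    by_contra! h
    exact hA ⟨x, y, hy, hx, fun i => by simpa [aeval_def, eval_map] using h i⟩
  have density_polyLE := hK ((le_max_right c d).trans_lt char_gt)
    (hc F ((le_max_left c d).trans_lt char_gt)) progressionFree
  exact (density_polyLE.mono ⟨by positivity, div_le_one_of_le₀ (Nat.cast_le.2 A.card_le_univ)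
    (Nat.cast_nonneg _)⟩ (by positivity) K.le_succ).le_mul_rpow (Nat.cast_nonneg _)
    (Nat.cast_pos.2 Fintype.card_pos)
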